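/- arXiv:2605.23519 — 4 statements merged into one kernel-verified Lean document; each statement's English description precedes it below -/
import Mathlib

section
/- For m = 3, the generating function satisfies the formal power series identity D₃(x) · Σ_{n≥0} a_n^{(3)} x^n = N₃(x), where N₃(x) = 1 − x − x² + x³ + 4x⁴ − 4x⁶ − 3x⁷ − 3x⁸ − 5x⁹ − 3x¹⁰ + 2x¹¹ + 2x¹² and D₃(x) = 1 − 2x − x² + x³ + x⁴ + 2x⁵ + 2x⁶ + 2x⁷ − 4x⁸ − 2x⁹ + x¹⁰ − 2x¹¹ + x¹³. In particular, a_0^{(3)}, a_1^{(3)}, a_2^{(3)}, … = 1, 1, 2, 5, 14, 28, 55, 108, 214, 412, 787, 1497, 2841, 5364, 10088, …. -/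
/-- `π` avoids the pattern 132: there are no indices `i < j < k` with `π i < π k < π j`. -/
def Avoids132 {n : ℕ} (π : Equiv.Perm (Fin n)) : Prop :=
  ¬ ∃ i j k : Fin n, i < j ∧ j < k ∧ π i < π k ∧ π k < π j

/-- `π` is `m`-bounded: adjacent entries differ by at most `m`. -/
def MBounded (m : ℕ) {n : ℕ} (π : Equiv.Perm (Fin n)) : Prop :=
  ∀ i : ℕ, ∀ h : i + 1 < n,
    |(((π ⟨i + 1, h⟩ : Fin n) : ℕ) : ℤ) - (((π ⟨i, by omega⟩ : Fin n) : ℕ) : ℤ)| ≤ (m : ℤ)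

/-- `a_n^{(m)}`: the number of `m`-bounded 132-avoiding permutations of length `n`. -/
noncomputable def aCount (m n : ℕ) : ℕ :=
  Nat.card {π : Equiv.Perm (Fin n) // Avoids132 π ∧ MBounded m π}

/-- The ordinary generating function `A^{(m)}(x) = Σ a_n^{(m)} x^n` over `ℚ`. -/
noncomputable def Aps (m : ℕ) : PowerSeries ℚ := PowerSeries.mk (fun n => (aCount m n : ℚ))

namespace Case3

/-- Recursive form of 132-avoidance for lists. -/
def Av : List ℕ → Prop
  | [] => True
  | a :: l => l.Pairwise (fun b c => ¬ (a < c ∧ c < b)) ∧ Av l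

/-- Adjacent entries differ by at most three. -/
def Rl (a b : ℕ) : Prop := a ≤ b + 3 ∧ b ≤ a + 3

lemma av_split (n : ℕ) (L R : List ℕ) (hL : ∀ x ∈ L, x < n) (hR : ∀ x ∈ R, x < n) :
    Av (L ++ n :: R) ↔ Av L ∧ Av R ∧ ∀ x ∈ L, ∀ y ∈ R, ¬ x < y := by
  induction L with
  | nil =>
    simp only [List.nil_append, Av, List.not_mem_nil, true_and]
    constructor
    · rintro ⟨_, h⟩; exact ⟨h, by simp⟩
    · rintro ⟨h, _⟩
      refine ⟨?_, h⟩
      rw [List.pairwise_iff_forall_sublist]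
      intro b c hs
      have := hR c (hs.subset (by simp))
      omega
  | cons a L ih =>
    have ih' := ih (fun x hx => hL x (by simp [hx]))
    simp only [List.cons_append, Av, ih', List.pairwise_append, List.pairwise_cons]
    have ha := hL a (by simp)
    constructor
    · rintro ⟨⟨h1, ⟨h2, h3⟩, h4⟩, h5, h6, h7⟩
      refine ⟨⟨h1, h5⟩, h6, ?_⟩
      intro x hx y hy
      rcases List.mem_cons.1 hx with rfl | hx
      · have := h2 y hy
        have := hR y hy
        omega
      · exact h7 x hx y hy
    · rintro ⟨⟨h1, h5⟩, h6, h7⟩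
      refine ⟨⟨h1, ⟨?_, ?_⟩, ?_⟩, h5, h6, ?_⟩
      · intro c hc
        have := h7 a (by simp) c hc
        omega
      · rw [List.pairwise_iff_forall_sublist]
        intro b c hs
        have := h7 a (by simp) c (hs.subset (by simp))
        omega
      · intro b hb c hc
        rcases List.mem_cons.1 hc with rfl | hc
        · have := hL b (by simp [hb])
          omega
        · have := h7 a (by simp) c hc
          omega
      · intro x hx y hy
        exact h7 x (by simp [hx]) y hy

lemma av_iff (l : List ℕ) : Av l ↔ ∀ i j k : ℕ, ∀ (hij : i < j) (hjk : j < k) (hk : k < l.length),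
    ¬ (l[i] < l[k] ∧ l[k] < l[j]) := by
  induction l with
  | nil => simp [Av]
  | cons a l ih =>
    simp only [Av, ih, List.pairwise_iff_getElem]
    constructor
    · rintro ⟨h1, h2⟩ i j k hij hjk hk
      obtain ⟨j, rfl⟩ : ∃ j', j = j' + 1 := ⟨j - 1, by omega⟩
      obtain ⟨k, rfl⟩ : ∃ j', k = j' + 1 := ⟨k - 1, by omega⟩
      rcases i with _ | i
      · simpa using h1 j k (by simp at hk; omega) (by simpa using hk) (by omega)
      · simpa using h2 i j k (by omega) (by omega) (by simpa using hk)
    · intro h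
      constructor
      · intro j k hj hk hjk
        have := h 0 (j+1) (k+1) (by omega) (by omega) (by simpa using hk)
        simpa only [List.getElem_cons_succ, List.getElem_cons_zero] using this
      · intro i j k hij hjk hk
        have := h (i+1) (j+1) (k+1) (by omega) (by omega) (by simpa using hk)
        simpa only [List.getElem_cons_succ] using this

open Classical in
/-- The relevant nonempty lists. -/
noncomputable def T (n : ℕ) : Finset (List ℕ) :=
  ((List.range n).permutations.toFinset).filter (fun l => l ≠ [] ∧ Av l ∧ l.IsChain Rl)

lemma mem_T (n : ℕ) (l : List ℕ) :
    l ∈ T n ↔ l.Perm (List.range n) ∧ l ≠ [] ∧ Av l ∧ l.IsChain Rl := by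
  simp [T]

lemma T_lt {n : ℕ} {l : List ℕ} (h : l ∈ T n) : ∀ x ∈ l, x < n := by
  intro x hx
  rw [mem_T] at h
  simpa using h.1.mem_iff.1 hx

/-- The list of a permutation. -/
def toL {n : ℕ} (π : Equiv.Perm (Fin n)) : List ℕ := List.ofFn (fun i => ((π i : Fin n) : ℕ))

lemma toL_mem {n : ℕ} (hn : 0 < n) (π : Equiv.Perm (Fin n)) :
    toL π ∈ T n ↔ Avoids132 π ∧ MBounded 3 π := by
  have h1 : (toL π).Perm (List.range n) := by
    rw [List.perm_ext_iff_of_nodup]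
    · intro a
      simp only [toL, List.mem_ofFn, List.mem_range]
      constructor
      · rintro ⟨i, rfl⟩; exact (π i).2
      · intro h; exact ⟨π.symm ⟨a, h⟩, by simp⟩
    · rw [toL, List.nodup_ofFn]
      intro i j h
      exact π.injective (Fin.ext h)
    · exact List.nodup_range
  have h2 : toL π ≠ [] := by
    intro h
    have := h1.length_eq
    simp [h] at this
    omega
  rw [mem_T]
  simp only [h1, h2, true_and, ne_eq, not_false_eq_true]
  refine and_congr ?_ ?_
  · rw [av_iff]
    simp only [toL, List.length_ofFn, List.getElem_ofFn, Avoids132]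
    constructor
    · rintro h ⟨i, j, k, hij, hjk, h3, h4⟩
      exact h i j k hij hjk k.2 ⟨h3, h4⟩
    · intro h i j k hij hjk hk h3
      exact h ⟨⟨i, by omega⟩, ⟨j, by omega⟩, ⟨k, hk⟩, hij, hjk, h3.1, h3.2⟩
  · rw [List.isChain_iff_getElem]
    simp only [toL, List.length_ofFn, List.getElem_ofFn, MBounded, Rl]
    refine forall_congr' fun i => forall_congr' fun h => ?_
    rw [abs_le]
    push_cast
    omega

lemma aCount_eq {n : ℕ} (hn : 0 < n) : aCount 3 n = (T n).card := by
  rw [aCount, ← Nat.card_eq_finsetCard]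
  refine Nat.card_congr (Equiv.ofBijective
    (fun π => (⟨toL π.1, (toL_mem hn π.1).2 π.2⟩ : {l // l ∈ T n})) ⟨?_, ?_⟩)
  · rintro ⟨π, hπ⟩ ⟨σ, hσ⟩ h
    simp only [toL, Subtype.mk.injEq] at h
    have h := List.ofFn_injective h
    apply Subtype.ext
    ext i
    exact congrFun h i
  · rintro ⟨l, hl⟩
    have hl' := hl
    have hlt := T_lt hl
    rw [mem_T] at hl'
    have hlen : l.length = n := by simpa using hl'.1.length_eq
    have hnd : l.Nodup := hl'.1.nodup_iff.2 List.nodup_range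
    subst hlen
    let f : Fin l.length → Fin l.length := fun i => ⟨l[i], hlt _ (List.getElem_mem _)⟩
    have hf : Function.Injective f := by
      intro i j h
      have h : l[i] = l[j] := congrArg Fin.val h
      exact Fin.ext ((hnd.getElem_inj_iff).1 h)
    let π : Equiv.Perm (Fin l.length) :=
      Equiv.ofBijective f (Finite.injective_iff_bijective.1 hf)
    have hπ : toL π = l := by
      apply List.ext_getElem
      · simp [toL]
      · intro i h1 h2
        simp [toL, π, f]
    refine ⟨⟨π, (toL_mem hn π).1 (by rw [hπ]; exact hl)⟩, ?_⟩
    exact Subtype.ext hπ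


lemma chain_snoc (L : List ℕ) (n : ℕ) (hL : L ≠ []) :
    (L ++ [n]).IsChain Rl ↔ L.IsChain Rl ∧ Rl (L.getLastD 0) n := by
  obtain ⟨L, z, rfl⟩ := (List.eq_nil_or_concat L).resolve_left hL
  simp [List.isChain_append]
  tauto

lemma chain_cons' (R : List ℕ) (n : ℕ) (hR : R ≠ []) :
    (n :: R).IsChain Rl ↔ R.IsChain Rl ∧ Rl n (R.headD 0) := by
  obtain ⟨z, R, rfl⟩ := List.exists_cons_of_ne_nil hR
  simp [List.isChain_cons_cons, and_comm]

lemma headD_mem (R : List ℕ) (hR : R ≠ []) : R.headD 0 ∈ R := by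
  obtain ⟨z, R, rfl⟩ := List.exists_cons_of_ne_nil hR
  simp

lemma getLastD_mem (R : List ℕ) (hR : R ≠ []) : R.getLastD 0 ∈ R := by
  obtain ⟨L, z, rfl⟩ := (List.eq_nil_or_concat R).resolve_left hR
  simp

lemma perm_cancel {n : ℕ} {L R : List ℕ} :
    (L ++ n :: R).Perm (List.range (n + 1)) ↔ (L ++ R).Perm (List.range n) := by
  rw [List.range_succ]
  constructor
  · intro h
    have h1 : (n :: (L ++ R)).Perm (n :: List.range n) :=
      List.perm_middle.symm.trans (h.trans (List.perm_append_singleton _ _))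
    exact h1.cons_inv
  · intro h
    exact List.perm_middle.trans ((h.cons n).trans (List.perm_append_singleton _ _).symm)

lemma mem_A (n : ℕ) (l : List ℕ) (hl : l ≠ []) :
    l ++ [n] ∈ T (n + 1) ↔ l ∈ T n ∧ n - 1 - l.getLastD 0 ≤ 2 := by
  rw [mem_T, mem_T, perm_cancel, chain_snoc _ _ hl, List.append_nil]
  constructor
  · rintro ⟨h1, h2, h3, h4, h5⟩
    have hlt : ∀ x ∈ l, x < n := fun x hx => by simpa using h1.mem_iff.1 hx
    rw [av_split n l [] hlt (by simp)] at h3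
    refine ⟨⟨h1, hl, h3.1, h4⟩, ?_⟩
    have := h5.2
    omega
  · rintro ⟨⟨h1, h2, h3, h4⟩, h5⟩
    have hlt : ∀ x ∈ l, x < n := fun x hx => by simpa using h1.mem_iff.1 hx
    have := hlt _ (getLastD_mem l hl)
    refine ⟨h1, by simp, (av_split n l [] hlt (by simp)).2 ⟨h3, by simp [Av], by simp⟩, h4, ?_⟩
    constructor <;> omega

lemma mem_B (n : ℕ) (l : List ℕ) (hl : l ≠ []) :
    n :: l ∈ T (n + 1) ↔ l ∈ T n ∧ n - 1 - l.headD 0 ≤ 2 := by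
  have := @perm_cancel n [] l
  simp only [List.nil_append] at this
  rw [mem_T, mem_T, this, chain_cons' _ _ hl]
  constructor
  · rintro ⟨h1, h2, h3, h4, h5⟩
    refine ⟨⟨h1, hl, h3.2, h4⟩, ?_⟩
    have := h5.1
    omega
  · rintro ⟨⟨h1, h2, h3, h4⟩, h5⟩
    have hlt : ∀ x ∈ l, x < n := fun x hx => by simpa using h1.mem_iff.1 hx
    have := hlt _ (headD_mem l hl)
    refine ⟨h1, by simp, (av_split n [] l (by simp) hlt).2 ⟨by simp [Av], h3, by simp⟩, h4, ?_⟩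
    constructor <;> omega

lemma mem_C (n : ℕ) (l : List ℕ) (hl : l ≠ []) :
    n :: (n + 1) :: l ∈ T (n + 2) ↔ l ∈ T n ∧ n - 1 - l.headD 0 ≤ 1 := by
  have h0 := @perm_cancel (n+1) [n] l
  have h0' := @perm_cancel n [] l
  simp only [List.nil_append, List.cons_append] at h0 h0'
  rw [mem_T, mem_T, h0, h0', List.isChain_cons_cons, chain_cons' _ _ hl]
  constructor
  · rintro ⟨h1, h2, h3, h4, h5, h6⟩
    refine ⟨⟨h1, hl, h3.2.2, h5⟩, ?_⟩
    have := h6.1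
    omega
  · rintro ⟨⟨h1, h2, h3, h4⟩, h5⟩
    have hlt : ∀ x ∈ l, x < n := fun x hx => by simpa using h1.mem_iff.1 hx
    have := hlt _ (headD_mem l hl)
    refine ⟨h1, by simp, ?_, ?_, h4, ?_⟩
    · refine (av_split (n+1) [n] l (by simp) (fun x hx => (hlt x hx).trans (by omega))).2
        ⟨by simp [Av], h3, ?_⟩
      intro x hx y hy
      have := hlt y hy
      simp at hx
      omega
    · constructor <;> omega
    · constructor <;> omega

lemma perm_three {n a b : ℕ} {l : List ℕ} (hab : [a, b].Perm [n + 1, n]) :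
    (a :: b :: (n + 2) :: l).Perm (List.range (n + 3)) ↔ l.Perm (List.range n) := by
  have h0 := @perm_cancel (n+2) [a, b] l
  have h1 := @perm_cancel (n+1) [] (n :: l)
  have h2 := @perm_cancel n [] l
  simp only [List.nil_append, List.cons_append] at h0 h1 h2
  rw [h0, ← h2, ← h1]
  have h3 : (a :: b :: l).Perm ((n + 1) :: n :: l) := hab.append_right l
  exact ⟨fun h => h3.symm.trans h, fun h => h3.trans h⟩

lemma mem_D (n a b : ℕ) (hab : [a, b].Perm [n + 1, n]) (l : List ℕ) (hl : l ≠ []) :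
    a :: b :: (n + 2) :: l ∈ T (n + 3) ↔ l ∈ T n ∧ n - 1 - l.headD 0 = 0 := by
  have ha : a = n ∨ a = n + 1 := by
    have := hab.mem_iff (a := a); simp at this; tauto
  have hb : b = n ∨ b = n + 1 := by
    have := hab.mem_iff (a := b); simp at this; tauto
  rw [mem_T, mem_T, perm_three hab, List.isChain_cons_cons, List.isChain_cons_cons,
    chain_cons' _ _ hl]
  constructor
  · rintro ⟨h1, h2, h3, h4, h5, h6, h7⟩
    refine ⟨⟨h1, hl, h3.2.2.2, h6⟩, ?_⟩
    have := h7.1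
    omega
  · rintro ⟨⟨h1, h2, h3, h4⟩, h5⟩
    have hlt : ∀ x ∈ l, x < n := fun x hx => by simpa using h1.mem_iff.1 hx
    have := hlt _ (headD_mem l hl)
    refine ⟨h1, by simp, ?_, ?_, ?_, h4, ?_⟩
    · refine (av_split (n+2) [a, b] l (by simp; omega)
        (fun x hx => (hlt x hx).trans (by omega))).2 ⟨by simp [Av], h3, ?_⟩
      intro x hx y hy
      have := hlt y hy
      simp at hx
      omega
    all_goals constructor <;> omega

lemma forms (k : ℕ) (l : List ℕ) (h : l ∈ T (k + 3)) :
    (∃ L, L ≠ [] ∧ l = L ++ [k + 2]) ∨ (∃ R, R ≠ [] ∧ l = (k + 2) :: R) ∨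
    (∃ R, R ≠ [] ∧ l = (k + 1) :: (k + 2) :: R) ∨
    (∃ R, R ≠ [] ∧ l = k :: (k + 1) :: (k + 2) :: R) ∨
    (∃ R, R ≠ [] ∧ l = (k + 1) :: k :: (k + 2) :: R) := by
  rw [mem_T] at h
  obtain ⟨h1, -, h3, h4⟩ := h
  have hn : k + 2 ∈ l := h1.mem_iff.2 (by simp)
  obtain ⟨L, R, rfl⟩ := List.append_of_mem hn
  rw [perm_cancel] at h1
  have hmem : ∀ x, (x ∈ L ∨ x ∈ R) ↔ x < k + 2 := by
    intro x
    have := h1.mem_iff (a := x)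
    simpa using this
  have hnd : (L ++ R).Nodup := h1.nodup_iff.2 List.nodup_range
  rw [List.nodup_append'] at hnd
  obtain ⟨hndL, hndR, hdis⟩ := hnd
  rw [av_split (k + 2) L R (fun x hx => (hmem x).1 (Or.inl hx))
    (fun x hx => (hmem x).1 (Or.inr hx))] at h3
  obtain ⟨-, -, h3⟩ := h3
  by_cases hL : L = []
  · subst hL
    right; left
    refine ⟨R, ?_, rfl⟩
    rintro rfl
    have := (hmem 0).2 (by omega)
    simp at this
  by_cases hR : R = []
  · subst hR
    left
    exact ⟨L, hL, rfl⟩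
  right; right
  rw [List.isChain_append, chain_cons' _ _ hR] at h4
  obtain ⟨-, ⟨-, h5⟩, -⟩ := h4
  have hr := headD_mem R hR
  have hbd : ∀ x ∈ L, x = k ∨ x = k + 1 := by
    intro x hx
    have e1 := h3 x hx _ hr
    have e2 := (hmem x).1 (Or.inl hx)
    have e3 : x ≠ R.headD 0 := fun e => hdis hx (e ▸ hr)
    have := h5.1
    omega
  have htop : k + 1 ∈ L := by
    by_contra hcon
    have e1 := ((hmem (k + 1)).2 (by omega)).resolve_left hcon
    obtain ⟨z, hz⟩ := List.exists_mem_of_ne_nil L hL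
    have e2 := h3 z hz _ e1
    rcases hbd z hz with e | e
    · omega
    · exact hcon (e ▸ hz)
  rcases L with _ | ⟨a, _ | ⟨b, _ | ⟨c, L⟩⟩⟩
  · simp at hL
  · simp at htop
    subst htop
    left
    exact ⟨R, hR, by simp⟩
  · right
    have ea := hbd a (by simp)
    have eb := hbd b (by simp)
    have hne : a ≠ b := by simpa using hndL
    rcases ea with rfl | rfl <;> rcases eb with rfl | rfl
    · omega
    · left; exact ⟨R, hR, by simp⟩
    · right; exact ⟨R, hR, by simp⟩
    · omega
  · exfalso
    have ea := hbd a (by simp)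
    have eb := hbd b (by simp)
    have ec := hbd c (by simp)
    simp at hndL
    omega

/-- Weighted enumeration by deficits of first and last entry. -/
noncomputable def W (n : ℕ) (w : ℕ → ℕ → ℚ) : ℚ :=
  ∑ l ∈ T n, w (n - 1 - l.headD 0) (n - 1 - l.getLastD 0)

lemma T_ne {n : ℕ} {l : List ℕ} (h : l ∈ T n) : l ≠ [] := ((mem_T n l).1 h).2.1

lemma T_last {n : ℕ} {l : List ℕ} (h : l ∈ T n) : l.getLastD 0 < n :=
  T_lt h _ (getLastD_mem l (T_ne h))

lemma T_head {n : ℕ} {l : List ℕ} (h : l ∈ T n) : l.headD 0 < n :=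
  T_lt h _ (headD_mem l (T_ne h))

open Classical in
lemma T_rec (k : ℕ) : T (k + 3) =
    ((T (k + 2)).filter (fun l => k + 1 - l.getLastD 0 ≤ 2)).image (fun l => l ++ [k + 2]) ∪
    (((T (k + 2)).filter (fun l => k + 1 - l.headD 0 ≤ 2)).image (fun l => (k + 2) :: l) ∪
    (((T (k + 1)).filter (fun l => k - l.headD 0 ≤ 1)).image
        (fun l => (k + 1) :: (k + 2) :: l) ∪
    (((T k).filter (fun l => k - 1 - l.headD 0 = 0)).image
        (fun l => k :: (k + 1) :: (k + 2) :: l) ∪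
    ((T k).filter (fun l => k - 1 - l.headD 0 = 0)).image
        (fun l => (k + 1) :: k :: (k + 2) :: l)))) := by
  ext l
  simp only [Finset.mem_union, Finset.mem_image, Finset.mem_filter]
  constructor
  · intro h
    rcases forms k l h with ⟨L, hL, rfl⟩ | ⟨L, hL, rfl⟩ | ⟨L, hL, rfl⟩ | ⟨L, hL, rfl⟩ | ⟨L, hL, rfl⟩
    · left; exact ⟨L, (mem_A (k + 2) L hL).1 h, rfl⟩
    · right; left; exact ⟨L, (mem_B (k + 2) L hL).1 h, rfl⟩
    · right; right; left; exact ⟨L, (mem_C (k + 1) L hL).1 h, rfl⟩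
    · right; right; right; left
      exact ⟨L, (mem_D k k (k + 1) (List.Perm.swap _ _ _) L hL).1 h, rfl⟩
    · right; right; right; right
      exact ⟨L, (mem_D k (k + 1) k (List.Perm.refl _) L hL).1 h, rfl⟩
  · rintro (⟨L, h, rfl⟩ | ⟨L, h, rfl⟩ | ⟨L, h, rfl⟩ | ⟨L, h, rfl⟩ | ⟨L, h, rfl⟩)
    · exact (mem_A (k + 2) L (T_ne h.1)).2 h
    · exact (mem_B (k + 2) L (T_ne h.1)).2 h
    · exact (mem_C (k + 1) L (T_ne h.1)).2 h
    · exact (mem_D k k (k + 1) (List.Perm.swap _ _ _) L (T_ne h.1)).2 h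
    · exact (mem_D k (k + 1) k (List.Perm.refl _) L (T_ne h.1)).2 h

lemma getLastD_cons_of_ne (a : ℕ) (l : List ℕ) (hl : l ≠ []) :
    (a :: l).getLastD 0 = l.getLastD 0 := by
  obtain ⟨z, R, rfl⟩ := List.exists_cons_of_ne_nil hl
  simp

lemma headD_append_of_ne (L l : List ℕ) (hl : L ≠ []) :
    (L ++ l).headD 0 = L.headD 0 := by
  obtain ⟨z, R, rfl⟩ := List.exists_cons_of_ne_nil hl
  simp

lemma W_rec (k : ℕ) (w : ℕ → ℕ → ℚ) : W (k + 3) w =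
    W (k + 2) (fun f l => if l ≤ 2 then w (f + 1) 0 else 0) +
    (W (k + 2) (fun f l => if f ≤ 2 then w 0 (l + 1) else 0) +
    (W (k + 1) (fun f l => if f ≤ 1 then w 1 (l + 2) else 0) +
    (W k (fun f l => if f = 0 then w 2 (l + 3) else 0) +
    W k (fun f l => if f = 0 then w 1 (l + 3) else 0)))) := by
  classical
  unfold W
  rw [T_rec]
  rw [Finset.sum_union, Finset.sum_union, Finset.sum_union, Finset.sum_union]
  · congr 1
    · rw [Finset.sum_image (by intro a _ b _ h; simpa using h), Finset.sum_filter]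
      refine Finset.sum_congr rfl fun l hl => ?_
      have e1 := T_head hl
      rw [headD_append_of_ne _ _ (T_ne hl)]
      have e2 : k + 3 - 1 - l.headD 0 = k + 2 - 1 - l.headD 0 + 1 := by omega
      rw [e2]
      simp
    congr 1
    · rw [Finset.sum_image (by intro a _ b _ h; simpa using h), Finset.sum_filter]
      refine Finset.sum_congr rfl fun l hl => ?_
      have e1 := T_last hl
      rw [getLastD_cons_of_ne _ _ (T_ne hl)]
      have e2 : k + 3 - 1 - l.getLastD 0 = k + 2 - 1 - l.getLastD 0 + 1 := by omega
      rw [e2]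
      simp
    congr 1
    · rw [Finset.sum_image (by intro a _ b _ h; simpa using h), Finset.sum_filter]
      refine Finset.sum_congr rfl fun l hl => ?_
      have e1 := T_last hl
      rw [getLastD_cons_of_ne _ _ (by simp), getLastD_cons_of_ne _ _ (T_ne hl)]
      have e2 : k + 3 - 1 - l.getLastD 0 = k + 1 - 1 - l.getLastD 0 + 2 := by omega
      rw [e2]
      simp
    congr 1
    · rw [Finset.sum_image (by intro a _ b _ h; simpa using h), Finset.sum_filter]
      refine Finset.sum_congr rfl fun l hl => ?_
      have e1 := T_last hl
      rw [getLastD_cons_of_ne _ _ (by simp), getLastD_cons_of_ne _ _ (by simp),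
        getLastD_cons_of_ne _ _ (T_ne hl)]
      have e2 : k + 3 - 1 - l.getLastD 0 = k - 1 - l.getLastD 0 + 3 := by omega
      rw [e2, List.headD_cons]
      have e3 : k + 3 - 1 - k = 2 := by omega
      rw [e3]
    · rw [Finset.sum_image (by intro a _ b _ h; simpa using h), Finset.sum_filter]
      refine Finset.sum_congr rfl fun l hl => ?_
      have e1 := T_last hl
      rw [getLastD_cons_of_ne _ _ (by simp), getLastD_cons_of_ne _ _ (by simp),
        getLastD_cons_of_ne _ _ (T_ne hl)]
      have e2 : k + 3 - 1 - l.getLastD 0 = k - 1 - l.getLastD 0 + 3 := by omega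
      rw [e2, List.headD_cons]
      have e3 : k + 3 - 1 - (k + 1) = 1 := by omega
      rw [e3]
  · rw [Finset.disjoint_left]
    simp only [Finset.mem_union, Finset.mem_image, Finset.mem_filter]
    rintro l ⟨L, h, rfl⟩ ⟨M, h', e⟩
    simp at e
  · rw [Finset.disjoint_left]
    simp only [Finset.mem_union, Finset.mem_image, Finset.mem_filter]
    rintro l ⟨L, h, rfl⟩ (⟨M, h', e⟩ | ⟨M, h', e⟩) <;> simp at e
  · rw [Finset.disjoint_left]
    simp only [Finset.mem_union, Finset.mem_image, Finset.mem_filter]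
    rintro l ⟨L, h, rfl⟩ (⟨M, h', e⟩ | ⟨M, h', e⟩ | ⟨M, h', e⟩) <;> simp at e
  · rw [Finset.disjoint_left]
    simp only [Finset.mem_union, Finset.mem_image, Finset.mem_filter]
    rintro l ⟨L, h, rfl⟩ (⟨M, h', e⟩ | ⟨M, h', e⟩ | ⟨M, h', e⟩ | ⟨M, h', e⟩)
    all_goals
      have e1 := T_last h'.1
      have e2 := T_ne h'.1
      have e3 := congrArg (fun l => l.getLastD 0) e
      simp only [getLastD_cons_of_ne _ _ e2, getLastD_cons_of_ne _ (_ :: _) (List.cons_ne_nil _ _),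
        List.getLastD_concat] at e3
      omega

lemma T_zero : T 0 = ∅ := by
  ext l
  rw [mem_T]
  simp
  tauto

lemma T_one : T 1 = {[0]} := by
  ext l
  rw [mem_T]
  simp
  rintro rfl
  simp [Av]

lemma T_two : T 2 = {[0, 1], [1, 0]} := by
  ext l
  have : l.Perm (List.range 2) ↔ l = [0, 1] ∨ l = [1, 0] := by
    rw [← List.mem_permutations']
    have : (List.range 2).permutations' = [[0,1],[1,0]] := by decide
    rw [this]; simp
  rw [mem_T, this]
  simp only [Finset.mem_insert, Finset.mem_singleton]
  constructor
  · exact fun h => h.1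
  · intro h
    refine ⟨h, ?_⟩
    rcases h with rfl | rfl <;> simp [Av, Rl]

lemma W_zero (w : ℕ → ℕ → ℚ) : W 0 w = 0 := by simp [W, T_zero]
lemma W_one (w : ℕ → ℕ → ℚ) : W 1 w = w 0 0 := by simp [W, T_one]
lemma W_two (w : ℕ → ℕ → ℚ) : W 2 w = w 1 0 + w 0 1 := by
  simp [W, T_two]

open PowerSeries

/-- Generating series of `W`. -/
noncomputable def G (w : ℕ → ℕ → ℚ) : PowerSeries ℚ := PowerSeries.mk (fun n => W n w)

lemma G_eq (w : ℕ → ℕ → ℚ) (h : w 0 0 = 1) (w1 w2 w3 w4 w5 : ℕ → ℕ → ℚ)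
    (h1 : ∀ f l, w1 f l = if l ≤ 2 then w (f + 1) 0 else 0)
    (h2 : ∀ f l, w2 f l = if f ≤ 2 then w 0 (l + 1) else 0)
    (h3 : ∀ f l, w3 f l = if f ≤ 1 then w 1 (l + 2) else 0)
    (h4 : ∀ f l, w4 f l = if f = 0 then w 2 (l + 3) else 0)
    (h5 : ∀ f l, w5 f l = if f = 0 then w 1 (l + 3) else 0) :
    G w = X + X * G w1 + X * G w2 + X ^ 2 * G w3 + X ^ 3 * G w4 + X ^ 3 * G w5 := by
  obtain rfl : w1 = _ := funext fun f => funext fun l => h1 f l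
  obtain rfl : w2 = _ := funext fun f => funext fun l => h2 f l
  obtain rfl : w3 = _ := funext fun f => funext fun l => h3 f l
  obtain rfl : w4 = _ := funext fun f => funext fun l => h4 f l
  obtain rfl : w5 = _ := funext fun f => funext fun l => h5 f l
  ext n
  rcases n with _ | _ | _ | k
  · simp [G, W_zero]
  · simp [G, W_zero, W_one, coeff_succ_X_mul, coeff_X_pow_mul', h]
  · simp [G, W_zero, W_one, W_two, coeff_succ_X_mul, coeff_X_pow_mul', coeff_X]
  · have e : ∀ φ : PowerSeries ℚ, coeff (k + 3) (X * φ) = coeff (k + 2) φ :=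
      fun φ => coeff_succ_X_mul _ _
    simp only [map_add, coeff_X_pow_mul', e, coeff_X]
    simp [G, W_rec k w]
    ring

/-- Indicator weights; a bound of at least 3 means no bound. -/
def ind (c x : ℕ) : Prop := c ≥ 3 ∨ x ≤ c

instance (c x : ℕ) : Decidable (ind c x) := by unfold ind; infer_instance

/-- Weight counting both deficits bounded. -/
def wt (i j : ℕ) (f l : ℕ) : ℚ := if ind i f ∧ ind j l then 1 else 0

/-- Zero weight. -/
def w0 (_f _l : ℕ) : ℚ := 0

lemma G_w0 : G w0 = 0 := by
  ext n
  simp [G, W, w0]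

lemma wt_val (i j f l : ℕ) : wt i j f l = if (3 ≤ i ∨ f ≤ i) ∧ (3 ≤ j ∨ l ≤ j) then 1 else 0 := by
  simp [wt, ind]

lemma ite_aux (a b c : Prop) [Decidable a] [Decidable b] [Decidable c] (h : a ↔ b ∧ c) :
    (if a then (1 : ℚ) else 0) = if b then (if c then 1 else 0) else 0 := by
  split_ifs <;> tauto

lemma ite_aux0 (b c : Prop) [Decidable b] [Decidable c] (h : ¬ (b ∧ c)) :
    (0 : ℚ) = if b then (if c then 1 else 0) else 0 := by
  split_ifs <;> tauto

lemma eq_3_3 : G (wt 3 3) = X + X * G (wt 3 2) + X * G (wt 2 3)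
    + X ^ 2 * G (wt 1 3) + X ^ 3 * G (wt 0 3) + X ^ 3 * G (wt 0 3) := by
  refine G_eq _ (by simp [wt_val]) _ _ _ _ _ ?_ ?_ ?_ ?_ ?_ <;> intro f l <;>
    simp only [wt_val, w0] <;> first | (apply ite_aux; omega) | (apply ite_aux0; omega)

lemma eq_3_2 : G (wt 3 2) = X + X * G (wt 3 2) + X * G (wt 2 1)
    + X ^ 2 * G (wt 1 0) + X ^ 3 * G w0 + X ^ 3 * G w0 := by
  refine G_eq _ (by simp [wt_val]) _ _ _ _ _ ?_ ?_ ?_ ?_ ?_ <;> intro f l <;>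
    simp only [wt_val, w0] <;> first | (apply ite_aux; omega) | (apply ite_aux0; omega)

lemma eq_2_3 : G (wt 2 3) = X + X * G (wt 1 2) + X * G (wt 2 3)
    + X ^ 2 * G (wt 1 3) + X ^ 3 * G (wt 0 3) + X ^ 3 * G (wt 0 3) := by
  refine G_eq _ (by simp [wt_val]) _ _ _ _ _ ?_ ?_ ?_ ?_ ?_ <;> intro f l <;>
    simp only [wt_val, w0] <;> first | (apply ite_aux; omega) | (apply ite_aux0; omega)

lemma eq_1_3 : G (wt 1 3) = X + X * G (wt 0 2) + X * G (wt 2 3)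
    + X ^ 2 * G (wt 1 3) + X ^ 3 * G w0 + X ^ 3 * G (wt 0 3) := by
  refine G_eq _ (by simp [wt_val]) _ _ _ _ _ ?_ ?_ ?_ ?_ ?_ <;> intro f l <;>
    simp only [wt_val, w0] <;> first | (apply ite_aux; omega) | (apply ite_aux0; omega)

lemma eq_0_3 : G (wt 0 3) = X + X * G w0 + X * G (wt 2 3)
    + X ^ 2 * G w0 + X ^ 3 * G w0 + X ^ 3 * G w0 := by
  refine G_eq _ (by simp [wt_val]) _ _ _ _ _ ?_ ?_ ?_ ?_ ?_ <;> intro f l <;>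
    simp only [wt_val, w0] <;> first | (apply ite_aux; omega) | (apply ite_aux0; omega)

lemma eq_2_1 : G (wt 2 1) = X + X * G (wt 1 2) + X * G (wt 2 0)
    + X ^ 2 * G w0 + X ^ 3 * G w0 + X ^ 3 * G w0 := by
  refine G_eq _ (by simp [wt_val]) _ _ _ _ _ ?_ ?_ ?_ ?_ ?_ <;> intro f l <;>
    simp only [wt_val, w0] <;> first | (apply ite_aux; omega) | (apply ite_aux0; omega)

lemma eq_1_0 : G (wt 1 0) = X + X * G (wt 0 2) + X * G w0
    + X ^ 2 * G w0 + X ^ 3 * G w0 + X ^ 3 * G w0 := by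
  refine G_eq _ (by simp [wt_val]) _ _ _ _ _ ?_ ?_ ?_ ?_ ?_ <;> intro f l <;>
    simp only [wt_val, w0] <;> first | (apply ite_aux; omega) | (apply ite_aux0; omega)

lemma eq_1_2 : G (wt 1 2) = X + X * G (wt 0 2) + X * G (wt 2 1)
    + X ^ 2 * G (wt 1 0) + X ^ 3 * G w0 + X ^ 3 * G w0 := by
  refine G_eq _ (by simp [wt_val]) _ _ _ _ _ ?_ ?_ ?_ ?_ ?_ <;> intro f l <;>
    simp only [wt_val, w0] <;> first | (apply ite_aux; omega) | (apply ite_aux0; omega)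

lemma eq_0_2 : G (wt 0 2) = X + X * G w0 + X * G (wt 2 1)
    + X ^ 2 * G w0 + X ^ 3 * G w0 + X ^ 3 * G w0 := by
  refine G_eq _ (by simp [wt_val]) _ _ _ _ _ ?_ ?_ ?_ ?_ ?_ <;> intro f l <;>
    simp only [wt_val, w0] <;> first | (apply ite_aux; omega) | (apply ite_aux0; omega)

lemma eq_2_0 : G (wt 2 0) = X + X * G (wt 1 2) + X * G w0
    + X ^ 2 * G w0 + X ^ 3 * G w0 + X ^ 3 * G w0 := by
  refine G_eq _ (by simp [wt_val]) _ _ _ _ _ ?_ ?_ ?_ ?_ ?_ <;> intro f l <;>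
    simp only [wt_val, w0] <;> first | (apply ite_aux; omega) | (apply ite_aux0; omega)

lemma Aps_eq : Aps 3 = 1 + G (wt 3 3) := by
  ext n
  rcases n with _ | n
  · simp only [Aps, G, coeff_mk, map_add, W_zero]
    have : aCount 3 0 = 1 := by
      rw [aCount, Nat.card_eq_one_iff_unique]
      refine ⟨inferInstance, ⟨⟨1, ?_, ?_⟩⟩⟩
      · rintro ⟨i, _⟩; exact i.elim0
      · intro i h; omega
    simp [this]
  · simp only [Aps, G, coeff_mk, map_add, aCount_eq (Nat.succ_pos n)]
    simp [W, wt_val, coeff_one]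

lemma main_eq : (1 - 2 * X - X ^ 2 + X ^ 3 + X ^ 4 + 2 * X ^ 5 + 2 * X ^ 6 + 2 * X ^ 7 - 4 * X ^ 8 - 2 * X ^ 9 + X ^ 10 - 2 * X ^ 11 + X ^ 13)
    * Aps 3 =
    1 - X - X ^ 2 + X ^ 3 + 4 * X ^ 4 - 4 * X ^ 6 - 3 * X ^ 7 - 3 * X ^ 8 - 5 * X ^ 9 - 3 * X ^ 10 + 2 * X ^ 11 + 2 * X ^ 12 := by
  rw [Aps_eq]
  have h_3_3 := eq_3_3
  have h_3_2 := eq_3_2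
  have h_2_3 := eq_2_3
  have h_1_3 := eq_1_3
  have h_0_3 := eq_0_3
  have h_2_1 := eq_2_1
  have h_1_0 := eq_1_0
  have h_1_2 := eq_1_2
  have h_0_2 := eq_0_2
  have h_2_0 := eq_2_0
  simp only [G_w0] at h_3_3 h_3_2 h_2_3 h_1_3 h_0_3 h_2_1 h_1_0 h_1_2 h_0_2 h_2_0
  linear_combination (1 - 2 * X - X ^ 2 + X ^ 3 + X ^ 4 + 2 * X ^ 5 + 2 * X ^ 6 + 2 * X ^ 7 - 4 * X ^ 8 - 2 * X ^ 9 + X ^ 10 - 2 * X ^ 11 + X ^ 13) * h_3_3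
    + (X - X ^ 2 - 2 * X ^ 3 - X ^ 4 + 2 * X ^ 6 + 4 * X ^ 7 + 6 * X ^ 8 + 2 * X ^ 9 + X ^ 11 - X ^ 12 - X ^ 13) * h_3_2
    + (X - X ^ 2 - X ^ 3 + X ^ 4 - X ^ 5 - 3 * X ^ 6 - X ^ 7 + 4 * X ^ 8 + X ^ 9 - X ^ 10 + 2 * X ^ 11 - X ^ 13) * h_2_3
    + (X ^ 2 - X ^ 3 - X ^ 4 - X ^ 5 + X ^ 6 + X ^ 9) * h_1_3
    + (2 * X ^ 3 - 2 * X ^ 4 - 3 * X ^ 5 - X ^ 6 + 3 * X ^ 7 + X ^ 8 - X ^ 9 + 2 * X ^ 10 - X ^ 12) * h_0_3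
    + (X ^ 2 - X ^ 5 - 2 * X ^ 7 - 2 * X ^ 8 - X ^ 10 + X ^ 12) * h_2_1
    + (X ^ 3 - 2 * X ^ 5 - X ^ 6 + X ^ 7 + 3 * X ^ 10 + 2 * X ^ 11 - X ^ 12 - X ^ 13) * h_1_0
    + (X ^ 2 + X ^ 5 - 2 * X ^ 6 - 4 * X ^ 7 - 3 * X ^ 8 - X ^ 10 - 2 * X ^ 11 + X ^ 12 + X ^ 13) * h_1_2
    + (2 * X ^ 3 - X ^ 5 - 2 * X ^ 6 - 2 * X ^ 7 - 3 * X ^ 8 - 3 * X ^ 9 + X ^ 10 + 2 * X ^ 11) * h_0_2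
    + (X ^ 3 - X ^ 6 - 2 * X ^ 8 - 2 * X ^ 9 - X ^ 11 + X ^ 13) * h_2_0

lemma coeff_rec (n : ℕ) :
    (1) * (if 0 ≤ n then (aCount 3 (n - 0) : ℚ) else 0) + (-2) * (if 1 ≤ n then (aCount 3 (n - 1) : ℚ) else 0) + (-1) * (if 2 ≤ n then (aCount 3 (n - 2) : ℚ) else 0) + (1) * (if 3 ≤ n then (aCount 3 (n - 3) : ℚ) else 0) + (1) * (if 4 ≤ n then (aCount 3 (n - 4) : ℚ) else 0) + (2) * (if 5 ≤ n then (aCount 3 (n - 5) : ℚ) else 0) + (2) * (if 6 ≤ n then (aCount 3 (n - 6) : ℚ) else 0) + (2) * (if 7 ≤ n then (aCount 3 (n - 7) : ℚ) else 0) + (-4) * (if 8 ≤ n then (aCount 3 (n - 8) : ℚ) else 0) + (-2) * (if 9 ≤ n then (aCount 3 (n - 9) : ℚ) else 0) + (1) * (if 10 ≤ n then (aCount 3 (n - 10) : ℚ) else 0) + (-2) * (if 11 ≤ n then (aCount 3 (n - 11) : ℚ) else 0) + (1) * (if 13 ≤ n then (aCount 3 (n - 13) : ℚ) else 0)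
    = (1) * (if n = 0 then (1 : ℚ) else 0) + (-1) * (if n = 1 then (1 : ℚ) else 0) + (-1) * (if n = 2 then (1 : ℚ) else 0) + (1) * (if n = 3 then (1 : ℚ) else 0) + (4) * (if n = 4 then (1 : ℚ) else 0) + (-4) * (if n = 6 then (1 : ℚ) else 0) + (-3) * (if n = 7 then (1 : ℚ) else 0) + (-3) * (if n = 8 then (1 : ℚ) else 0) + (-5) * (if n = 9 then (1 : ℚ) else 0) + (-3) * (if n = 10 then (1 : ℚ) else 0) + (2) * (if n = 11 then (1 : ℚ) else 0) + (2) * (if n = 12 then (1 : ℚ) else 0) := by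
  have h : C (1) * (X ^ 0 * Aps 3) + C (-2) * (X ^ 1 * Aps 3) + C (-1) * (X ^ 2 * Aps 3) + C (1) * (X ^ 3 * Aps 3) + C (1) * (X ^ 4 * Aps 3) + C (2) * (X ^ 5 * Aps 3) + C (2) * (X ^ 6 * Aps 3) + C (2) * (X ^ 7 * Aps 3) + C (-4) * (X ^ 8 * Aps 3) + C (-2) * (X ^ 9 * Aps 3) + C (1) * (X ^ 10 * Aps 3) + C (-2) * (X ^ 11 * Aps 3) + C (1) * (X ^ 13 * Aps 3)
    = C (1) * (X : PowerSeries ℚ) ^ 0 + C (-1) * (X : PowerSeries ℚ) ^ 1 + C (-1) * (X : PowerSeries ℚ) ^ 2 + C (1) * (X : PowerSeries ℚ) ^ 3 + C (4) * (X : PowerSeries ℚ) ^ 4 + C (-4) * (X : PowerSeries ℚ) ^ 6 + C (-3) * (X : PowerSeries ℚ) ^ 7 + C (-3) * (X : PowerSeries ℚ) ^ 8 + C (-5) * (X : PowerSeries ℚ) ^ 9 + C (-3) * (X : PowerSeries ℚ) ^ 10 + C (2) * (X : PowerSeries ℚ) ^ 11 + C (2) * (X : PowerSeries ℚ) ^ 12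 := by
    simp only [map_neg, map_one, map_ofNat]
    linear_combination main_eq
  have h' := congrArg (coeff n) h
  simp only [map_add, coeff_C_mul, coeff_X_pow_mul', coeff_X_pow, Aps, coeff_mk] at h'
  exact h'

lemma val_0 : aCount 3 0 = 1 := by
  have h := coeff_rec 0
  norm_num [] at h
  have h2 : (aCount 3 0 : ℚ) = 1 := by exact_mod_cast h
  exact_mod_cast h2

lemma val_1 : aCount 3 1 = 1 := by
  have h := coeff_rec 1
  norm_num [val_0] at h
  have h2 : (aCount 3 1 : ℚ) = 1 := by linarith
  exact_mod_cast h2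

lemma val_2 : aCount 3 2 = 2 := by
  have h := coeff_rec 2
  norm_num [val_0, val_1] at h
  have h2 : (aCount 3 2 : ℚ) = 2 := by linarith
  exact_mod_cast h2

lemma val_3 : aCount 3 3 = 5 := by
  have h := coeff_rec 3
  norm_num [val_0, val_1, val_2] at h
  have h2 : (aCount 3 3 : ℚ) = 5 := by linarith
  exact_mod_cast h2

lemma val_4 : aCount 3 4 = 14 := by
  have h := coeff_rec 4
  norm_num [val_0, val_1, val_2, val_3] at h
  have h2 : (aCount 3 4 : ℚ) = 14 := by linarith
  exact_mod_cast h2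

lemma val_5 : aCount 3 5 = 28 := by
  have h := coeff_rec 5
  norm_num [val_0, val_1, val_2, val_3, val_4] at h
  have h2 : (aCount 3 5 : ℚ) = 28 := by linarith
  exact_mod_cast h2

lemma val_6 : aCount 3 6 = 55 := by
  have h := coeff_rec 6
  norm_num [val_0, val_1, val_2, val_3, val_4, val_5] at h
  have h2 : (aCount 3 6 : ℚ) = 55 := by linarith
  exact_mod_cast h2

lemma val_7 : aCount 3 7 = 108 := by
  have h := coeff_rec 7
  norm_num [val_0, val_1, val_2, val_3, val_4, val_5, val_6] at h
  have h2 : (aCount 3 7 : ℚ) = 108 := by linarith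
  exact_mod_cast h2

lemma val_8 : aCount 3 8 = 214 := by
  have h := coeff_rec 8
  norm_num [val_0, val_1, val_2, val_3, val_4, val_5, val_6, val_7] at h
  have h2 : (aCount 3 8 : ℚ) = 214 := by linarith
  exact_mod_cast h2

lemma val_9 : aCount 3 9 = 412 := by
  have h := coeff_rec 9
  norm_num [val_0, val_1, val_2, val_3, val_4, val_5, val_6, val_7, val_8] at h
  have h2 : (aCount 3 9 : ℚ) = 412 := by linarith
  exact_mod_cast h2

lemma val_10 : aCount 3 10 = 787 := by
  have h := coeff_rec 10
  norm_num [val_0, val_1, val_2, val_3, val_4, val_5, val_6, val_7, val_8, val_9] at h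
  have h2 : (aCount 3 10 : ℚ) = 787 := by linarith
  exact_mod_cast h2

lemma val_11 : aCount 3 11 = 1497 := by
  have h := coeff_rec 11
  norm_num [val_0, val_1, val_2, val_3, val_4, val_5, val_6, val_7, val_8, val_9, val_10] at h
  have h2 : (aCount 3 11 : ℚ) = 1497 := by linarith
  exact_mod_cast h2

lemma val_12 : aCount 3 12 = 2841 := by
  have h := coeff_rec 12
  norm_num [val_0, val_1, val_2, val_3, val_4, val_5, val_6, val_7, val_8, val_9, val_10, val_11] at h
  have h2 : (aCount 3 12 : ℚ) = 2841 := by linarith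
  exact_mod_cast h2

lemma val_13 : aCount 3 13 = 5364 := by
  have h := coeff_rec 13
  norm_num [val_0, val_1, val_2, val_3, val_4, val_5, val_6, val_7, val_8, val_9, val_10, val_11, val_12] at h
  have h2 : (aCount 3 13 : ℚ) = 5364 := by linarith
  exact_mod_cast h2

lemma val_14 : aCount 3 14 = 10088 := by
  have h := coeff_rec 14
  norm_num [val_0, val_1, val_2, val_3, val_4, val_5, val_6, val_7, val_8, val_9, val_10, val_11, val_12, val_13] at h
  have h2 : (aCount 3 14 : ℚ) = 10088 := by linarith
  exact_mod_cast h2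

end Case3

theorem case_m_eq_three :
    (1 - 2 * PowerSeries.X - PowerSeries.X ^ 2 + PowerSeries.X ^ 3 + PowerSeries.X ^ 4
        + 2 * PowerSeries.X ^ 5 + 2 * PowerSeries.X ^ 6 + 2 * PowerSeries.X ^ 7
        - 4 * PowerSeries.X ^ 8 - 2 * PowerSeries.X ^ 9 + PowerSeries.X ^ 10
        - 2 * PowerSeries.X ^ 11 + (PowerSeries.X : PowerSeries ℚ) ^ 13) * Aps 3 =
      1 - PowerSeries.X - PowerSeries.X ^ 2 + PowerSeries.X ^ 3 + 4 * PowerSeries.X ^ 4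
        - 4 * PowerSeries.X ^ 6 - 3 * PowerSeries.X ^ 7 - 3 * PowerSeries.X ^ 8
        - 5 * PowerSeries.X ^ 9 - 3 * PowerSeries.X ^ 10 + 2 * PowerSeries.X ^ 11
        + 2 * PowerSeries.X ^ 12 ∧
    aCount 3 0 = 1 ∧ aCount 3 1 = 1 ∧ aCount 3 2 = 2 ∧ aCount 3 3 = 5 ∧
    aCount 3 4 = 14 ∧ aCount 3 5 = 28 ∧ aCount 3 6 = 55 ∧ aCount 3 7 = 108 ∧
    aCount 3 8 = 214 ∧ aCount 3 9 = 412 ∧ aCount 3 10 = 787 ∧ aCount 3 11 = 1497 ∧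
    aCount 3 12 = 2841 ∧ aCount 3 13 = 5364 ∧ aCount 3 14 = 10088 := by
  exact ⟨Case3.main_eq, Case3.val_0, Case3.val_1, Case3.val_2, Case3.val_3, Case3.val_4,
    Case3.val_5, Case3.val_6, Case3.val_7, Case3.val_8, Case3.val_9, Case3.val_10, Case3.val_11,
    Case3.val_12, Case3.val_13, Case3.val_14⟩
end

section
/- For m = 3 and every n ≥ 13, the counting sequence satisfies the constant-coefficient linear recurrence a_n^{(3)} = 2a_{n−1}^{(3)} + a_{n−2}^{(3)} − a_{n−3}^{(3)} − a_{n−4}^{(3)} − 2a_{n−5}^{(3)} − 2a_{n−6}^{(3)} − 2a_{n−7}^{(3)} + 4a_{n−8}^{(3)} + 2a_{n−9}^{(3)} − a_{n−10}^{(3)} + 2a_{n−11}^{(3)} − a_{n−13}^{(3)}. -/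
/-- 132-avoidance, recursively on lists. -/
def Av : List ℕ → Prop
  | [] => True
  | x :: l => l.Pairwise (fun y z => ¬ (x < z ∧ z < y)) ∧ Av l

/-- adjacency relation -/
def Near (x y : ℕ) : Prop := x ≤ y + 3 ∧ y ≤ x + 3

/-- lists which are one-line notations of admissible permutations. -/
def Valid (n : ℕ) (l : List ℕ) : Prop :=
  l.Nodup ∧ (∀ x, x ∈ l ↔ x < n) ∧ Av l ∧ l.IsChain Near

/-- distance of the first entry from the maximum -/
def hg (n : ℕ) (l : List ℕ) : ℕ := n - 1 - l.headD 0
/-- distance of the last entry from the maximum -/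
def lg (n : ℕ) (l : List ℕ) : ℕ := n - 1 - l.getLastD 0

/-- recursive generation of all nonempty admissible permutations -/
def G : ℕ → List (List ℕ)
  | 0 => []
  | 1 => [[0]]
  | 2 => [[0, 1], [1, 0]]
  | n + 3 =>
    ((G (n + 2)).filter (fun R => decide (hg (n + 2) R ≤ 2))).map (fun R => (n + 2) :: R) ++
    (((G (n + 1)).filter (fun R => decide (hg (n + 1) R ≤ 1))).map
      (fun R => (n + 1) :: (n + 2) :: R) ++
    (((G n).filter (fun R => decide (hg n R ≤ 0))).map
      (fun R => (n + 1) :: n :: (n + 2) :: R) ++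
    (((G n).filter (fun R => decide (hg n R ≤ 0))).map
      (fun R => n :: (n + 1) :: (n + 2) :: R) ++
    ((G (n + 2)).filter (fun R => decide (lg (n + 2) R ≤ 2))).map (fun R => R ++ [n + 2]))))

theorem pw_of_mem {r : ℕ → ℕ → Prop} {l : List ℕ} (h : ∀ x ∈ l, ∀ y ∈ l, r x y) :
    l.Pairwise r :=
  List.pairwise_iff_getElem.2 (fun _ _ _ _ _ => h _ (by simp) _ (by simp))

theorem av_append_max (n : ℕ) (l : List ℕ) (h : ∀ x ∈ l, x < n) : Av (l ++ [n]) ↔ Av l := by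
  induction l with
  | nil => simp [Av]
  | cons a l ih =>
    simp only [List.mem_cons, forall_eq_or_imp] at h
    simp only [List.cons_append, Av, ih h.2, List.pairwise_append, List.pairwise_singleton,
      List.mem_singleton]
    have : ∀ x ∈ l, ∀ b, b = n → ¬ (a < b ∧ b < x) := by
      intro x hx b hb; have := h.2 x hx; omega
    tauto

theorem av_split (n : ℕ) (l R : List ℕ) (h : Av (l ++ n :: R)) (hR : ∀ x ∈ R, x < n) :
    Av R ∧ ∀ x ∈ l, ∀ y ∈ R, y ≤ x := by
  induction l with
  | nil => simpa [Av] using h.2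
  | cons a l ih =>
    obtain ⟨h1, h2⟩ := h
    refine ⟨(ih h2).1, ?_⟩
    intro x hx y hy
    rcases List.mem_cons.1 hx with rfl | hx
    · have := (List.pairwise_append.1 h1).2.1
      have := (List.pairwise_cons.1 this).1 y hy
      have := hR y hy
      omega
    · exact (ih h2).2 x hx y hy

theorem av_cons_big (a : ℕ) (l : List ℕ) (h : ∀ x ∈ l, x ≤ a) : Av (a :: l) ↔ Av l := by
  simp only [Av, and_iff_right_iff_imp]
  intro _
  apply pw_of_mem
  intro x hx y hy
  have := h y hy
  omega

theorem valid_D (n : ℕ) (L : List ℕ) (hL : L ≠ []) :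
    Valid (n + 1) (L ++ [n]) ↔ Valid n L ∧ lg n L ≤ 2 := by
  rcases List.eq_nil_or_concat L with rfl | ⟨L', y, rfl⟩
  · simp at hL
  rw [List.concat_eq_append] at *
  by_cases hm : ∀ x, x ∈ L' ++ [y] ↔ x < n
  · have hy : y < n := (hm y).1 (by simp)
    have h1 : ∀ x, x ∈ L' ++ [y] ++ [n] ↔ x < n + 1 := by
      intro x; rw [List.mem_append, hm]; simp; omega
    unfold Valid
    rw [av_append_max n _ (fun x hx => (hm x).1 hx), List.isChain_append, List.nodup_append]
    have h3 : lg n (L' ++ [y]) ≤ 2 ↔ Near y n := by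
      simp [lg, Near]; omega
    rw [h3]
    have h4 : ∀ a ∈ L' ++ [y], ∀ b ∈ [n], a ≠ b := by
      intro a ha b hb; have := (hm a).1 ha; simp at hb; omega
    have h5 : (∀ x ∈ (L' ++ [y]).getLast?, ∀ z ∈ [n].head?, Near x z) ↔ Near y n := by simp
    rw [h5]
    have h6 : List.IsChain Near [n] := by simp
    have h7 : [n].Nodup := by simp
    tauto
  · constructor
    · intro h
      exfalso; apply hm
      intro x
      have h1 := h.2.1 x
      have h2 := (List.nodup_append.1 h.1).2.2
      have h3 := fun hx => h2 x hx n (by simp)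
      rw [List.mem_append] at h1
      simp only [List.mem_singleton] at h1
      constructor
      · intro hx; have := h1.1 (Or.inl hx); have := h3 hx; omega
      · intro hx; rcases h1.2 (by omega) with h | h
        · exact h
        · omega
    · intro h; exact absurd h.1.2.1 hm

theorem valid_A (n : ℕ) (R : List ℕ) (hR : R ≠ []) :
    (Valid n R ∧ hg n R ≤ 2) ↔ Valid (n + 1) (n :: R) := by
  obtain ⟨y, R', rfl⟩ := List.exists_cons_of_ne_nil hR
  constructor
  · rintro ⟨⟨h1, h2, h3, h4⟩, h5⟩
    have hy := (h2 y).1 (by simp)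
    refine ⟨List.nodup_cons.2 ⟨fun h => by have := (h2 n).1 h; omega, h1⟩, ?_, ?_, ?_⟩
    · intro x; rw [List.mem_cons, h2]; omega
    · rw [av_cons_big _ _ (fun x hx => ((h2 x).1 hx).le)]; exact h3
    · rw [List.isChain_cons_cons]; refine ⟨?_, h4⟩
      simp [hg] at h5; unfold Near; omega
  · rintro ⟨h1, h2, h3, h4⟩
    rw [List.isChain_cons_cons] at h4
    rw [List.nodup_cons] at h1
    refine ⟨⟨h1.2, ?_, h3.2, h4.2⟩, ?_⟩
    · intro x; have := h2 x; rw [List.mem_cons] at this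
      by_cases hx : x = n
      · subst hx; simpa using h1.1
      · constructor
        · intro h; have := this.1 (Or.inr h); omega
        · intro h; exact (this.2 (by omega)).resolve_left hx
    · have := h4.1; simp [hg]; unfold Near at this; omega

theorem valid_B (n : ℕ) (R : List ℕ) (hR : R ≠ []) :
    (Valid n R ∧ hg n R ≤ 1) ↔ Valid (n + 2) (n :: (n + 1) :: R) := by
  obtain ⟨y, R', rfl⟩ := List.exists_cons_of_ne_nil hR
  constructor
  · rintro ⟨⟨h1, h2, h3, h4⟩, h5⟩
    have hy := (h2 y).1 (by simp)
    have k1 : n ∉ y :: R' := fun h => by have := (h2 n).1 h; omega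
    have k2 : n + 1 ∉ y :: R' := fun h => by have := (h2 _).1 h; omega
    refine ⟨?_, ?_, ?_, ?_⟩
    · rw [List.nodup_cons, List.nodup_cons, List.mem_cons]
      exact ⟨by rintro (h | h); omega; exact k1 h, k2, h1⟩
    · intro x; rw [List.mem_cons, List.mem_cons, h2]; omega
    · refine ⟨?_, ?_⟩
      · rw [List.pairwise_cons]
        constructor
        · intro z hz; have := (h2 z).1 hz; omega
        · apply pw_of_mem
          intro x hx z hz; have := (h2 z).1 hz; omega
      · rw [av_cons_big _ _ (fun x hx => by have := ((h2 x).1 hx).le; omega)]; exact h3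
    · rw [List.isChain_cons_cons, List.isChain_cons_cons]; refine ⟨?_, ?_, h4⟩
      · unfold Near; omega
      · simp [hg] at h5; unfold Near; omega
  · rintro ⟨h1, h2, h3, h4⟩
    rw [List.isChain_cons_cons, List.isChain_cons_cons] at h4
    rw [List.nodup_cons, List.nodup_cons, List.mem_cons] at h1
    refine ⟨⟨h1.2.2, ?_, h3.2.2, h4.2.2⟩, ?_⟩
    · intro x; have := h2 x; rw [List.mem_cons, List.mem_cons] at this
      by_cases hx : x = n
      · subst hx; have := h1.1; simp at this ⊢; tauto
      by_cases hx' : x = n + 1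
      · subst hx'; simpa using h1.2.1
      · constructor
        · intro h; have := this.1 (Or.inr (Or.inr h)); omega
        · intro h; exact ((this.2 (by omega)).resolve_left hx).resolve_left hx'
    · have := h4.2.1; simp [hg]; unfold Near at this; omega

theorem valid_C (n a b : ℕ) (R : List ℕ) (hR : R ≠ []) (hab : a = n + 1 ∧ b = n ∨ a = n ∧ b = n + 1) :
    (Valid n R ∧ hg n R ≤ 0) ↔ Valid (n + 3) (a :: b :: (n + 2) :: R) := by
  have hb1 : n ≤ b ∧ b ≤ n + 1 := by omega
  obtain ⟨y, R', rfl⟩ := List.exists_cons_of_ne_nil hR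
  constructor
  · rintro ⟨⟨h1, h2, h3, h4⟩, h5⟩
    have hy := (h2 y).1 (by simp)
    have k : ∀ c, n ≤ c → c ∉ y :: R' := fun c hc h => by have := (h2 c).1 h; omega
    refine ⟨?_, ?_, ?_, ?_⟩
    · rw [List.nodup_cons, List.nodup_cons, List.nodup_cons]
      refine ⟨?_, ?_, k _ (by omega), h1⟩
      · rw [List.mem_cons, List.mem_cons]
        rintro (h | h | h)
        · omega
        · omega
        · exact k _ (by omega) h
      · rw [List.mem_cons]
        rintro (h | h)
        · omega
        · exact k _ (by omega) h
    · intro x; rw [List.mem_cons, List.mem_cons, List.mem_cons, h2]; omega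
    · refine ⟨?_, ?_, ?_⟩
      · rw [List.pairwise_cons, List.pairwise_cons]
        refine ⟨?_, ?_, ?_⟩
        · intro z hz; rw [List.mem_cons] at hz
          rcases hz with rfl | hz
          · omega
          · have := (h2 z).1 hz; omega
        · intro z hz; have := (h2 z).1 hz; omega
        · apply pw_of_mem
          intro x hx z hz; have := (h2 z).1 hz; omega
      · rw [List.pairwise_cons]
        constructor
        · intro z hz; have := (h2 z).1 hz; omega
        · apply pw_of_mem
          intro x hx z hz; have := (h2 z).1 hz; omega
      · rw [av_cons_big _ _ (fun x hx => by have := ((h2 x).1 hx).le; omega)]; exact h3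
    · rw [List.isChain_cons_cons, List.isChain_cons_cons, List.isChain_cons_cons]
      refine ⟨?_, ?_, ?_, h4⟩
      · unfold Near; omega
      · unfold Near; omega
      · simp [hg] at h5; unfold Near; omega
  · rintro ⟨h1, h2, h3, h4⟩
    rw [List.isChain_cons_cons, List.isChain_cons_cons, List.isChain_cons_cons] at h4
    rw [List.nodup_cons, List.nodup_cons, List.nodup_cons] at h1
    have hm : ∀ x, x ∈ y :: R' ↔ x < n := by
      intro x; have := h2 x; rw [List.mem_cons, List.mem_cons, List.mem_cons] at this
      by_cases hxa : x = a
      · subst hxa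
        have h1 := h1.1
        constructor
        · intro h; exact absurd (List.mem_cons_of_mem _ (List.mem_cons_of_mem _ h)) h1
        · intro h; omega
      by_cases hxb : x = b
      · subst hxb
        have h1 := h1.2.1
        constructor
        · intro h; exact absurd (List.mem_cons_of_mem _ h) h1
        · intro h; omega
      by_cases hxc : x = n + 2
      · subst hxc
        constructor
        · intro h; exact absurd h h1.2.2.1
        · intro h; omega
      constructor
      · intro h; have := this.1 (Or.inr (Or.inr (Or.inr h))); omega
      · intro h
        exact (((this.2 (by omega)).resolve_left hxa).resolve_left hxb).resolve_left hxc
    refine ⟨⟨h1.2.2.2, hm, h3.2.2.2, h4.2.2.2⟩, ?_⟩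
    have := h4.2.2.1; simp [hg]; unfold Near at this; omega

/-- possible shapes -/
theorem valid_shape (n : ℕ) (l : List ℕ) (h : Valid (n + 3) l) :
    (∃ R, R ≠ [] ∧ l = (n + 2) :: R) ∨ (∃ R, R ≠ [] ∧ l = (n + 1) :: (n + 2) :: R) ∨
    (∃ R, R ≠ [] ∧ l = (n + 1) :: n :: (n + 2) :: R) ∨
    (∃ R, R ≠ [] ∧ l = n :: (n + 1) :: (n + 2) :: R) ∨
    (∃ L, L ≠ [] ∧ l = L ++ [n + 2]) := by
  obtain ⟨h1, h2, h3, h4⟩ := h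
  obtain ⟨L, R, rfl⟩ := List.append_of_mem ((h2 (n + 2)).2 (by omega))
  have hnd := List.nodup_append.1 h1
  have hR : ∀ x ∈ R, x < n + 2 := by
    intro x hx
    have a1 := (h2 x).1 (by simp [hx])
    have a2 := (List.nodup_cons.1 hnd.2.1).1
    have : x ≠ n + 2 := by rintro rfl; exact a2 hx
    omega
  have hs := (av_split _ _ _ h3 hR).2
  rcases R with _ | ⟨y, R⟩
  · right; right; right; right
    refine ⟨L, ?_, rfl⟩
    rintro rfl
    have := (h2 0).2 (by omega)
    simp at this
  have hy : n ≤ y + 1 := by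
    have := (List.isChain_append.1 h4).2.1
    rw [List.isChain_cons_cons] at this
    have := this.1
    unfold Near at this; omega
  have hL : ∀ x ∈ L, y < x ∧ x < n + 2 := by
    intro x hx
    have a1 := (h2 x).1 (by simp [hx])
    have a2 := hs x hx y (by simp)
    have a3 := hnd.2.2 x hx y (by simp)
    have a4 := hnd.2.2 x hx (n + 2) (by simp)
    omega
  have hup : ∀ x, (∃ z ∈ L, z < x) → x < n + 2 → x ∈ L := by
    rintro x ⟨z, hz, hzx⟩ hx
    have := (h2 x).2 (by omega)
    rw [List.mem_append, List.mem_cons] at this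
    rcases this with h | h | h
    · exact h
    · omega
    · have := hs z hz x h; omega
  rcases L with _ | ⟨a, _ | ⟨b, _ | ⟨c, L⟩⟩⟩
  · left; exact ⟨y :: R, by simp, rfl⟩
  · right; left
    have ha := hL a (by simp)
    have : a = n + 1 := by
      by_contra hne
      have := hup (n + 1) ⟨a, by simp, by omega⟩ (by omega)
      simp at this; omega
    subst this
    exact ⟨y :: R, by simp, rfl⟩
  · have ha := hL a (by simp)
    have hb := hL b (by simp)
    have hab : a ≠ b := by have := hnd.1; simp at this; exact this
    have : (a = n + 1 ∧ b = n) ∨ (a = n ∧ b = n + 1) := by omega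
    rcases this with ⟨rfl, rfl⟩ | ⟨rfl, rfl⟩
    · right; right; left; exact ⟨y :: R, by simp, rfl⟩
    · right; right; right; left; exact ⟨y :: R, by simp, rfl⟩
  · exfalso
    have ha := hL a (by simp)
    have hb := hL b (by simp)
    have hc := hL c (by simp)
    have := hnd.1; simp at this; omega

theorem valid_perm (n : ℕ) (l : List ℕ) (h : Valid n l) : l.Perm (List.range n) := by
  rw [List.perm_ext_iff_of_nodup h.1 List.nodup_range]
  intro x; rw [h.2.1, List.mem_range]

theorem mem_G (n : ℕ) (l : List ℕ) : l ∈ G n ↔ Valid n l ∧ l ≠ [] := by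
  induction n using Nat.strong_induction_on generalizing l with
  | _ n ih =>
  match n, ih with
  | 0, _ =>
    simp only [G, List.not_mem_nil, false_iff]
    rintro ⟨h, h'⟩
    have := valid_perm _ _ h
    simp at this; exact h' this
  | 1, _ =>
    simp only [G, List.mem_singleton]
    constructor
    · rintro rfl; simp [Valid, Av]
    · rintro ⟨h, h'⟩
      have := valid_perm _ _ h
      simpa using this
  | 2, _ =>
    simp only [G, List.mem_cons, List.not_mem_nil, or_false]
    constructor
    · rintro (rfl | rfl)
      · refine ⟨⟨by simp, by intro x; simp; omega, by simp [Av], by simp [Near]⟩, by simp⟩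
      · refine ⟨⟨by simp, by intro x; simp; omega, by simp [Av], by simp [Near]⟩, by simp⟩
    · rintro ⟨h, h'⟩
      have := valid_perm _ _ h
      rw [← List.mem_permutations] at this
      have e : (List.range 2).permutations = [[0, 1], [1, 0]] := by
        simp [List.range_succ, List.permutations, List.permutationsAux, List.permutationsAux.rec]
      rw [e] at this
      simpa using this
  | n + 3, ih =>
    simp only [G, List.mem_append, List.mem_map, List.mem_filter, decide_eq_true_eq]
    simp only [ih (n + 2) (by omega), ih (n + 1) (by omega), ih n (by omega)]
    constructor
    · rintro (⟨R, ⟨⟨h1, h2⟩, h3⟩, rfl⟩ | ⟨R, ⟨⟨h1, h2⟩, h3⟩, rfl⟩ | ⟨R, ⟨⟨h1, h2⟩, h3⟩, rfl⟩ |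
        ⟨R, ⟨⟨h1, h2⟩, h3⟩, rfl⟩ | ⟨R, ⟨⟨h1, h2⟩, h3⟩, rfl⟩)
      · exact ⟨(valid_A _ _ h2).1 ⟨h1, h3⟩, by simp⟩
      · exact ⟨(valid_B _ _ h2).1 ⟨h1, h3⟩, by simp⟩
      · exact ⟨(valid_C _ _ _ _ h2 (by simp)).1 ⟨h1, h3⟩, by simp⟩
      · exact ⟨(valid_C _ _ _ _ h2 (by simp)).1 ⟨h1, h3⟩, by simp⟩
      · exact ⟨(valid_D _ _ h2).2 ⟨h1, h3⟩, by simp⟩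
    · rintro ⟨h, -⟩
      rcases valid_shape n l h with ⟨R, h2, rfl⟩ | ⟨R, h2, rfl⟩ | ⟨R, h2, rfl⟩ | ⟨R, h2, rfl⟩ |
        ⟨R, h2, rfl⟩
      · have := (valid_A _ _ h2).2 h
        exact Or.inl ⟨R, ⟨⟨this.1, h2⟩, this.2⟩, rfl⟩
      · have := (valid_B _ _ h2).2 h
        exact Or.inr (Or.inl ⟨R, ⟨⟨this.1, h2⟩, this.2⟩, rfl⟩)
      · have := (valid_C _ _ _ _ h2 (by simp)).2 h
        exact Or.inr (Or.inr (Or.inl ⟨R, ⟨⟨this.1, h2⟩, this.2⟩, rfl⟩))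
      · have := (valid_C _ _ _ _ h2 (by simp)).2 h
        exact Or.inr (Or.inr (Or.inr (Or.inl ⟨R, ⟨⟨this.1, h2⟩, this.2⟩, rfl⟩)))
      · have := (valid_D _ _ h2).1 h
        exact Or.inr (Or.inr (Or.inr (Or.inr ⟨R, ⟨⟨this.1, h2⟩, this.2⟩, rfl⟩)))

theorem last_ne (n : ℕ) (R L : List ℕ) (hR : Valid n R) (h0 : R ≠ []) (P : List ℕ) (m : ℕ)
    (hm : n ≤ m) : P ++ R ≠ L ++ [m] := by
  intro h
  rcases List.eq_nil_or_concat R with rfl | ⟨R', y, rfl⟩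
  · exact h0 rfl
  rw [List.concat_eq_append, ← List.append_assoc] at h
  have := List.append_inj_right' h (by simp)
  have hy := (hR.2.1 y).1 (by simp)
  simp at this; omega

theorem nodup_G (n : ℕ) : (G n).Nodup := by
  induction n using Nat.strong_induction_on with
  | _ n ih =>
  match n, ih with
  | 0, _ => simp [G]
  | 1, _ => simp [G]
  | 2, _ => simp [G]
  | n + 3, ih =>
    simp only [G]
    have i2 := ih (n + 2) (by omega)
    have i1 := ih (n + 1) (by omega)
    have i0 := ih n (by omega)
    rw [List.nodup_append, List.nodup_append, List.nodup_append, List.nodup_append]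
    refine ⟨?_, ⟨?_, ⟨?_, ⟨?_, ?_, ?_⟩, ?_⟩, ?_⟩, ?_⟩
    · exact (i2.filter _).map (fun a b h => by simpa using h)
    · exact (i1.filter _).map (fun a b h => by simpa using h)
    · exact (i0.filter _).map (fun a b h => by simpa using h)
    · exact (i0.filter _).map (fun a b h => by simpa using h)
    · exact (i2.filter _).map (fun a b h => by simpa using h)
    · simp only [List.mem_map, List.mem_filter, mem_G]
      rintro a ⟨R, ⟨⟨h1, h2⟩, -⟩, rfl⟩ b ⟨R', -, rfl⟩
      exact last_ne n R R' h1 h2 [n, n + 1, n + 2] _ (by omega)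
    · simp only [List.mem_append, List.mem_map, List.mem_filter, mem_G]
      rintro a ⟨R, ⟨⟨h1, h2⟩, -⟩, rfl⟩ b (⟨R', -, rfl⟩ | ⟨R', -, rfl⟩)
      · simp
      · exact last_ne n R R' h1 h2 [n + 1, n, n + 2] _ (by omega)
    · simp only [List.mem_append, List.mem_map, List.mem_filter, mem_G]
      rintro a ⟨R, ⟨⟨h1, h2⟩, -⟩, rfl⟩ b (⟨R', -, rfl⟩ | ⟨R', -, rfl⟩ | ⟨R', -, rfl⟩)
      · simp
      · simp
      · exact last_ne _ R R' h1 h2 [n + 1, n + 2] _ (by omega)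
    · simp only [List.mem_append, List.mem_map, List.mem_filter, mem_G]
      rintro a ⟨R, ⟨⟨h1, h2⟩, -⟩, rfl⟩ b (⟨R', -, rfl⟩ | ⟨R', -, rfl⟩ | ⟨R', -, rfl⟩ | ⟨R', -, rfl⟩)
      · simp
      · simp
      · simp
      · exact last_ne _ R R' h1 h2 [n + 2] _ (by omega)

/-- counting by gap predicates -/
def cnt (n : ℕ) (S E : ℕ → Bool) : ℕ :=
  (G n).countP (fun l => S (hg n l) && E (lg n l))

theorem countP_helper (n k : ℕ) (F : List ℕ → List ℕ) (S E S' E' : ℕ → Bool) (b : Bool)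
    (Q : List ℕ → Bool)
    (h : ∀ R, R ≠ [] → Valid n R → ((S (hg k (F R)) && E (lg k (F R))) && Q R) =
       (b && (S' (hg n R) && E' (lg n R)))) :
    (((G n).filter Q).map F).countP (fun l => S (hg k l) && E (lg k l)) =
      if b then cnt n S' E' else 0 := by
  rw [List.countP_map, List.countP_filter]
  have : List.countP (fun a => (((fun l => S (hg k l) && E (lg k l)) ∘ F) a) && Q a) (G n) =
      List.countP (fun a => b && (S' (hg n a) && E' (lg n a))) (G n) := by
    apply List.countP_congr
    intro R hR
    have := (mem_G _ _).1 hR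
    have := h R this.2 this.1
    simp only [Function.comp_apply, this]
  rw [this]
  cases b <;> simp [cnt]

theorem lg_append (n j : ℕ) (P R : List ℕ) (hR : Valid n R) (h0 : R ≠ []) :
    lg (n + j) (P ++ R) = lg n R + j := by
  rcases List.eq_nil_or_concat R with rfl | ⟨R', y, rfl⟩
  · exact absurd rfl h0
  have hy := (hR.2.1 y).1 (by simp)
  rw [List.concat_eq_append, ← List.append_assoc]
  simp [lg]; omega

theorem hg_append (n : ℕ) (R : List ℕ) (hR : Valid n R) (h0 : R ≠ []) :
    hg (n + 1) (R ++ [n]) = hg n R + 1 := by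
  obtain ⟨y, R', rfl⟩ := List.exists_cons_of_ne_nil h0
  have hy := (hR.2.1 y).1 (by simp)
  simp [hg]; omega

theorem cnt_rec (n : ℕ) (S E : ℕ → Bool) :
    cnt (n + 3) S E =
      (if S 0 then cnt (n + 2) (fun x => decide (x ≤ 2)) (fun x => E (x + 1)) else 0) +
      ((if S 1 then cnt (n + 1) (fun x => decide (x ≤ 1)) (fun x => E (x + 2)) else 0) +
      ((if S 1 then cnt n (fun x => decide (x ≤ 0)) (fun x => E (x + 3)) else 0) +
      ((if S 2 then cnt n (fun x => decide (x ≤ 0)) (fun x => E (x + 3)) else 0) +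
      (if E 0 then cnt (n + 2) (fun x => S (x + 1)) (fun x => decide (x ≤ 2)) else 0)))) := by
  conv_lhs => unfold cnt
  simp only [G, List.countP_append]
  congr 1
  · apply countP_helper _ _ _ _ _ _ _ (b := _)
    intro R h0 hR
    have e1 := lg_append (n + 2) 1 [n + 2] R hR h0
    have e2 : hg (n + 3) ((n + 2) :: R) = 0 := by simp [hg]
    simp only [List.cons_append, List.nil_append] at e1
    rw [e1, e2, Bool.and_assoc, Bool.and_comm (E _)]
  congr 1
  · apply countP_helper _ _ _ _ _ _ _ (b := _)
    intro R h0 hR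
    have e1 := lg_append (n + 1) 2 [n + 1, n + 2] R hR h0
    have e2 : hg (n + 3) ((n + 1) :: (n + 2) :: R) = 1 := by simp [hg]
    simp only [List.cons_append, List.nil_append] at e1
    rw [e1, e2, Bool.and_assoc, Bool.and_comm (E _)]
  congr 1
  · apply countP_helper _ _ _ _ _ _ _ (b := _)
    intro R h0 hR
    have e1 := lg_append n 3 [n + 1, n, n + 2] R hR h0
    have e2 : hg (n + 3) ((n + 1) :: n :: (n + 2) :: R) = 1 := by simp [hg]
    simp only [List.cons_append, List.nil_append] at e1
    rw [e1, e2, Bool.and_assoc, Bool.and_comm (E _)]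
  congr 1
  · apply countP_helper _ _ _ _ _ _ _ (b := _)
    intro R h0 hR
    have e1 := lg_append n 3 [n, n + 1, n + 2] R hR h0
    have e2 : hg (n + 3) (n :: (n + 1) :: (n + 2) :: R) = 2 := by simp [hg]
    simp only [List.cons_append, List.nil_append] at e1
    rw [e1, e2, Bool.and_assoc, Bool.and_comm (E _)]
  · apply countP_helper _ _ _ _ _ _ _ (b := _)
    intro R h0 hR
    have e1 := hg_append (n + 2) R hR h0
    have e2 : lg (n + 3) (R ++ [n + 2]) = 0 := by simp [lg]
    rw [e1, e2, Bool.and_comm (S _), Bool.and_assoc]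

theorem av_iff (l : List ℕ) : Av l ↔ ∀ i j k (hij : i < j) (hjk : j < k) (hk : k < l.length),
    ¬ (l[i] < l[k] ∧ l[k] < l[j]) := by
  induction l with
  | nil => simp [Av]
  | cons a l ih =>
    rw [Av, ih, List.pairwise_iff_getElem]
    constructor
    · rintro ⟨h1, h2⟩ i j k hij hjk hk
      obtain ⟨j, rfl⟩ : ∃ j', j = j' + 1 := ⟨j - 1, by omega⟩
      obtain ⟨k, rfl⟩ : ∃ j', k = j' + 1 := ⟨k - 1, by omega⟩
      simp only [List.length_cons] at hk
      rcases i with _ | i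
      · simpa using h1 j k (by omega) (by omega) (by omega)
      · simpa using h2 i j k (by omega) (by omega) (by omega)
    · intro h
      constructor
      · intro j k hj hk hjk
        exact h 0 (j + 1) (k + 1) (by omega) (by omega) (by simpa using hk)
      · intro i j k hij hjk hk
        exact h (i + 1) (j + 1) (k + 1) (by omega) (by omega) (by simpa using hk)

theorem valid_ofFn (n : ℕ) (π : Equiv.Perm (Fin n)) (h1 : Avoids132 π) (h2 : MBounded 3 π) :
    Valid n (List.ofFn (fun i => (π i : ℕ))) := by
  refine ⟨?_, ?_, ?_, ?_⟩
  · rw [List.nodup_ofFn]; intro a b h; exact π.injective (Fin.ext h)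
  · intro x; rw [List.mem_ofFn]
    constructor
    · rintro ⟨i, rfl⟩; exact (π i).2
    · intro h; exact ⟨π.symm ⟨x, h⟩, by simp⟩
  · rw [av_iff]
    intro i j k hij hjk hk h
    simp only [List.length_ofFn] at hk
    simp only [List.getElem_ofFn] at h
    exact h1 ⟨⟨i, by omega⟩, ⟨j, by omega⟩, ⟨k, by omega⟩, hij, hjk, h.1, h.2⟩
  · rw [List.isChain_iff_getElem]
    intro i hi
    simp only [List.length_ofFn] at hi
    have := h2 i hi
    simp only [List.getElem_ofFn]
    rw [abs_le] at this
    unfold Near; push_cast at this; omega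

theorem exists_of_valid (n : ℕ) (l : List ℕ) (h : Valid n l) :
    ∃ π : Equiv.Perm (Fin n), (Avoids132 π ∧ MBounded 3 π) ∧
      List.ofFn (fun i => (π i : ℕ)) = l := by
  have hlen : l.length = n := by simpa using (valid_perm n l h).length_eq
  obtain ⟨h1, h2, h3, h4⟩ := h
  subst hlen
  let f : Fin l.length → Fin l.length := fun i => ⟨l[i], (h2 _).1 (by simp)⟩
  have hf : Function.Injective f := by
    intro a b hab
    have : l[a] = l[b] := congrArg Fin.val hab
    exact Fin.ext ((List.Nodup.getElem_inj_iff h1).1 this)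
  refine ⟨Equiv.ofBijective f (Finite.injective_iff_bijective.1 hf), ⟨?_, ?_⟩, ?_⟩
  · rintro ⟨i, j, k, hij, hjk, h5, h6⟩
    exact (av_iff l).1 h3 i j k hij hjk k.2 ⟨h5, h6⟩
  · intro i hi
    have := (List.isChain_iff_getElem.1 h4) i hi
    simp only [Equiv.ofBijective_apply, f]
    unfold Near at this
    simp only [Fin.getElem_fin]
    rw [abs_le]; push_cast; omega
  · simp [f]

theorem aCount_eq (n : ℕ) (hn : n ≠ 0) : aCount 3 n = (G n).length := by
  have hG : ∀ l, l ∈ (G n).toFinset ↔ Valid n l := by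
    intro l; rw [List.mem_toFinset, mem_G, and_iff_left_iff_imp]
    rintro h rfl
    have := (h.2.1 0).2 (by omega)
    simp at this
  have : aCount 3 n = Nat.card {l // l ∈ (G n).toFinset} := by
    unfold aCount
    apply Nat.card_eq_of_bijective
      (fun π => ⟨List.ofFn (fun i => (π.1 i : ℕ)), (hG _).2 (valid_ofFn n π.1 π.2.1 π.2.2)⟩)
    constructor
    · rintro ⟨a, ha⟩ ⟨b, hb⟩ hab
      simp only [Subtype.mk.injEq, List.ofFn_inj] at hab
      apply Subtype.ext
      ext i
      exact congrFun hab i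
    · rintro ⟨l, hl⟩
      obtain ⟨π, h1, h2⟩ := exists_of_valid n l ((hG l).1 hl)
      exact ⟨⟨π, h1⟩, Subtype.ext h2⟩
  rw [this, Nat.card_eq_fintype_card, Fintype.card_coe, List.toFinset_card_of_nodup (nodup_G n)]

theorem aCount_zero : aCount 3 0 = 1 := by
  unfold aCount
  have : Unique {π : Equiv.Perm (Fin 0) // Avoids132 π ∧ MBounded 3 π} :=
    { default := ⟨1, by rintro ⟨i, _⟩; exact i.elim0, by intro i h; omega⟩
      uniq := fun a => Subtype.ext (Subsingleton.elim _ _) }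
  exact Nat.card_unique

theorem cnt_false_left (n : ℕ) (E : ℕ → Bool) : cnt n (fun _ => false) E = 0 := by
  simp [cnt]

theorem cnt_false_right (n : ℕ) (S : ℕ → Bool) : cnt n S (fun _ => false) = 0 := by
  simp [cnt]

/-- counting sequence -/
def sa (n : ℕ) : ℤ := cnt n (fun _ => true) (fun _ => true)
/-- counting sequence -/
def sb (n : ℕ) : ℤ := cnt n (fun x => decide (x ≤ 2)) (fun _ => true)
/-- counting sequence -/
def sd (n : ℕ) : ℤ := cnt n (fun x => decide (x ≤ 1)) (fun _ => true)
/-- counting sequence -/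
def sf (n : ℕ) : ℤ := cnt n (fun x => decide (x ≤ 0)) (fun _ => true)
/-- counting sequence -/
def sg (n : ℕ) : ℤ := cnt n (fun _ => true) (fun x => decide (x ≤ 2))
/-- counting sequence -/
def sh (n : ℕ) : ℤ := cnt n (fun x => decide (x ≤ 1)) (fun x => decide (x ≤ 2))
/-- counting sequence -/
def sk (n : ℕ) : ℤ := cnt n (fun x => decide (x ≤ 0)) (fun x => decide (x ≤ 2))
/-- counting sequence -/
def sp (n : ℕ) : ℤ := cnt n (fun x => decide (x ≤ 2)) (fun x => decide (x ≤ 1))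
/-- counting sequence -/
def sw (n : ℕ) : ℤ := cnt n (fun x => decide (x ≤ 1)) (fun x => decide (x ≤ 0))
/-- counting sequence -/
def sr (n : ℕ) : ℤ := cnt n (fun x => decide (x ≤ 2)) (fun x => decide (x ≤ 0))

theorem sa_rec (n : ℕ) : sa (n + 3) = sb (n + 2) + sd (n + 1) + sf n + sf n + sg (n + 2) := by
  simp [sa, sb, sd, sf, sg, cnt_rec, cnt_false_left, cnt_false_right]
  try ring

theorem sb_rec (n : ℕ) : sb (n + 3) = sb (n + 2) + sd (n + 1) + sf n + sf n + sh (n + 2) := by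
  simp [sb, sd, sf, sh, cnt_rec, cnt_false_left, cnt_false_right]
  try ring

theorem sd_rec (n : ℕ) : sd (n + 3) = sb (n + 2) + sd (n + 1) + sf n + sk (n + 2) := by
  simp [sd, sb, sf, sk, cnt_rec, cnt_false_left, cnt_false_right]
  try ring

theorem sf_rec (n : ℕ) : sf (n + 3) = sb (n + 2) := by
  simp [sf, sb, cnt_rec, cnt_false_left, cnt_false_right]
  try ring

theorem sg_rec (n : ℕ) : sg (n + 3) = sp (n + 2) + sw (n + 1) + sg (n + 2) := by
  simp [sg, sp, sw, cnt_rec, cnt_false_left, cnt_false_right]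
  try ring

theorem sh_rec (n : ℕ) : sh (n + 3) = sp (n + 2) + sw (n + 1) + sk (n + 2) := by
  simp [sh, sk, sp, sw, cnt_rec, cnt_false_left, cnt_false_right]
  try ring

theorem sk_rec (n : ℕ) : sk (n + 3) = sp (n + 2) := by
  simp [sk, sp, cnt_rec, cnt_false_left, cnt_false_right]
  try ring

theorem sp_rec (n : ℕ) : sp (n + 3) = sr (n + 2) + sh (n + 2) := by
  simp [sp, sh, sr, cnt_rec, cnt_false_left, cnt_false_right]
  try ring

theorem sw_rec (n : ℕ) : sw (n + 3) = sk (n + 2) := by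
  simp [sw, sk, cnt_rec, cnt_false_left, cnt_false_right]
  try ring

theorem sr_rec (n : ℕ) : sr (n + 3) = sh (n + 2) := by
  simp [sr, sh, cnt_rec, cnt_false_left, cnt_false_right]
  try ring

theorem sa_base : sa 0 = 0 ∧ sa 1 = 1 ∧ sa 2 = 2 := by decide

theorem sb_base : sb 0 = 0 ∧ sb 1 = 1 ∧ sb 2 = 2 := by decide

theorem sd_base : sd 0 = 0 ∧ sd 1 = 1 ∧ sd 2 = 2 := by decide

theorem sf_base : sf 0 = 0 ∧ sf 1 = 1 ∧ sf 2 = 1 := by decide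

theorem sg_base : sg 0 = 0 ∧ sg 1 = 1 ∧ sg 2 = 2 := by decide

theorem sh_base : sh 0 = 0 ∧ sh 1 = 1 ∧ sh 2 = 2 := by decide

theorem sk_base : sk 0 = 0 ∧ sk 1 = 1 ∧ sk 2 = 1 := by decide

theorem sp_base : sp 0 = 0 ∧ sp 1 = 1 ∧ sp 2 = 2 := by decide

theorem sw_base : sw 0 = 0 ∧ sw 1 = 1 ∧ sw 2 = 1 := by decide

theorem sr_base : sr 0 = 0 ∧ sr 1 = 1 ∧ sr 2 = 1 := by decide

theorem aCount_sa (n : ℕ) : (aCount 3 (n + 1) : ℤ) = sa (n + 1) := by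
  rw [aCount_eq _ (by omega), sa]; simp [cnt]

theorem p_h (n : ℕ) : sp (n + 4) = sh (n + 3) + sh (n + 2) := by
  have := sp_rec (n + 1); have := sr_rec n; linarith

theorem k_h (n : ℕ) : sk (n + 5) = sh (n + 3) + sh (n + 2) := by
  have := sk_rec (n + 2); have := p_h n; linarith

theorem q_h (n : ℕ) : sw (n + 6) = sh (n + 3) + sh (n + 2) := by
  have := sw_rec (n + 3); have := k_h n; linarith

theorem h_lin (n : ℕ) : sh (n + 8) =
    sh (n + 6) + 2 * sh (n + 5) + sh (n + 4) + sh (n + 3) + sh (n + 2) := by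
  have := sh_rec (n + 5); have := p_h (n + 3); have := k_h (n + 2); have := q_h n; linarith

theorem b_lin (n : ℕ) : sb (n + 8) =
    sb (n + 7) + sb (n + 6) + 2 * sb (n + 4) - sb (n + 2)
      + sh (n + 7) - sh (n + 5) + sh (n + 3) + sh (n + 2) := by
  have := sb_rec (n + 5); have := sb_rec (n + 3); have := sd_rec (n + 3); have := sf_rec n
  have := sf_rec (n + 2); have := k_h n; linarith

theorem a_lin (n : ℕ) : sa (n + 9) - sa (n + 8) =
    sb (n + 9) - sb (n + 8) - sh (n + 8) + sh (n + 7)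
      + sh (n + 6) + sh (n + 5) + sh (n + 3) + sh (n + 2) := by
  have := sa_rec (n + 6); have := sa_rec (n + 5); have := sb_rec (n + 6); have := sb_rec (n + 5)
  have := sg_rec (n + 5); have := p_h (n + 3); have := q_h n
  linarith

theorem sa_big (n : ℕ) : sa (n + 21) =
    2 * sa (n + 20) + sa (n + 19) - sa (n + 18) - sa (n + 17) - 2 * sa (n + 16) - 2 * sa (n + 15)
    - 2 * sa (n + 14) + 4 * sa (n + 13) + 2 * sa (n + 12) - sa (n + 11) + 2 * sa (n + 10)
    - sa (n + 8) := by
  have a0 := a_lin (n + 0)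
  have a1 := a_lin (n + 1)
  have a2 := a_lin (n + 2)
  have a3 := a_lin (n + 3)
  have a4 := a_lin (n + 4)
  have a5 := a_lin (n + 5)
  have a6 := a_lin (n + 6)
  have a7 := a_lin (n + 7)
  have a8 := a_lin (n + 8)
  have a9 := a_lin (n + 9)
  have a10 := a_lin (n + 10)
  have a11 := a_lin (n + 11)
  have a12 := a_lin (n + 12)
  have b6 := b_lin (n + 6)
  have b7 := b_lin (n + 7)
  have b8 := b_lin (n + 8)
  have b9 := b_lin (n + 9)
  have b10 := b_lin (n + 10)
  have b11 := b_lin (n + 11)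
  have b12 := b_lin (n + 12)
  have b13 := b_lin (n + 13)
  have h0 := h_lin (n + 0)
  have h1 := h_lin (n + 1)
  have h2 := h_lin (n + 2)
  have h3 := h_lin (n + 3)
  have h4 := h_lin (n + 4)
  have h5 := h_lin (n + 5)
  have h6 := h_lin (n + 6)
  have h7 := h_lin (n + 7)
  have h8 := h_lin (n + 8)
  have h9 := h_lin (n + 9)
  have h10 := h_lin (n + 10)
  have h11 := h_lin (n + 11)
  have h12 := h_lin (n + 12)
  simp only [Nat.add_assoc, Nat.reduceAdd, Nat.add_zero] at *
  linarith

theorem sa_values : sa 1 = 1 ∧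
    sa 2 = 2 ∧
    sa 3 = 5 ∧
    sa 4 = 14 ∧
    sa 5 = 28 ∧
    sa 6 = 55 ∧
    sa 7 = 108 ∧
    sa 8 = 214 ∧
    sa 9 = 412 ∧
    sa 10 = 787 ∧
    sa 11 = 1497 ∧
    sa 12 = 2841 ∧
    sa 13 = 5364 ∧
    sa 14 = 10088 ∧
    sa 15 = 18916 ∧
    sa 16 = 35391 ∧
    sa 17 = 66060 ∧
    sa 18 = 123049 ∧
    sa 19 = 228788 ∧
    sa 20 = 424725 := by
  simp [sa_rec, sb_rec, sd_rec, sf_rec, sg_rec, sh_rec, sk_rec, sp_rec, sw_rec, sr_rec, sa_base,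
    sb_base, sd_base, sf_base, sg_base, sh_base, sk_base, sp_base, sw_base, sr_base]

theorem recurrence_m_eq_three (n : ℕ) (hn : 13 ≤ n) :
    (aCount 3 n : ℤ) =
      2 * (aCount 3 (n - 1) : ℤ) + (aCount 3 (n - 2) : ℤ) - (aCount 3 (n - 3) : ℤ)
      - (aCount 3 (n - 4) : ℤ) - 2 * (aCount 3 (n - 5) : ℤ) - 2 * (aCount 3 (n - 6) : ℤ)
      - 2 * (aCount 3 (n - 7) : ℤ) + 4 * (aCount 3 (n - 8) : ℤ) + 2 * (aCount 3 (n - 9) : ℤ)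
      - (aCount 3 (n - 10) : ℤ) + 2 * (aCount 3 (n - 11) : ℤ) - (aCount 3 (n - 13) : ℤ) := by
  obtain ⟨m, rfl⟩ : ∃ m, n = m + 13 := ⟨n - 13, by omega⟩
  have key : ∀ k, 1 ≤ k → (aCount 3 k : ℤ) = sa k := by
    intro k hk
    obtain ⟨j, rfl⟩ : ∃ j, k = j + 1 := ⟨k - 1, by omega⟩
    exact aCount_sa j
  rcases Nat.eq_zero_or_pos m with rfl | hm
  · have h0 := aCount_zero
    simp only [Nat.zero_add, Nat.reduceSub, h0]
    simp only [key _ (show 1 ≤ 13 by omega), key _ (show 1 ≤ 12 by omega),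
      key _ (show 1 ≤ 11 by omega), key _ (show 1 ≤ 10 by omega), key _ (show 1 ≤ 9 by omega),
      key _ (show 1 ≤ 8 by omega), key _ (show 1 ≤ 7 by omega), key _ (show 1 ≤ 6 by omega),
      key _ (show 1 ≤ 5 by omega), key _ (show 1 ≤ 4 by omega), key _ (show 1 ≤ 3 by omega),
      key _ (show 1 ≤ 2 by omega)]
    have := sa_values
    push_cast
    omega
  · rw [key (m + 13) (by omega), key (m + 13 - 1) (by omega), key (m + 13 - 2) (by omega),
      key (m + 13 - 3) (by omega), key (m + 13 - 4) (by omega), key (m + 13 - 5) (by omega),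
      key (m + 13 - 6) (by omega), key (m + 13 - 7) (by omega), key (m + 13 - 8) (by omega),
      key (m + 13 - 9) (by omega), key (m + 13 - 10) (by omega), key (m + 13 - 11) (by omega),
      key (m + 13 - 13) (by omega)]
    rcases Nat.lt_or_ge m 8 with hm8 | hm8
    · have := sa_values
      interval_cases m <;> simp only [Nat.reduceAdd, Nat.reduceSub] <;> omega
    · obtain ⟨j, rfl⟩ : ∃ j, m = j + 8 := ⟨m - 8, by omega⟩
      exact sa_big j
end

section
/- For every m ≥ 2, the component U_m is weighted aperiodic: in the weighted directed multigraph on U_m having an edge c → d of weight e whenever the coefficient of x^e in the entry of W_{U_m}(x) in row d, column c is positive, the greatest common divisor of the total weights of all directed closed walks equals 1. For every m ≥ 3, the component V_m is weighted aperiodic in the same sense (with W_{V_m}(x) in place of W_{U_m}(x)). -/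
/-- Threshold subtraction in `WithTop ℤ`: `∞ - k = ∞`. -/
def wsub (q : WithTop ℤ) (k : ℕ) : WithTop ℤ := WithTop.map (fun z => z - (k : ℤ)) q

/-- `B_m = {0, 1, …, m-1, ∞}` inside `WithTop ℤ`. -/
def Bset (m : ℕ) : Set (WithTop ℤ) :=
  {x | x = ⊤ ∨ ∃ j : ℕ, j < m ∧ x = ((j : ℤ) : WithTop ℤ)}

/-- `T_{u,v}^{(m)}(n)`: the number of `m`-bounded 132-avoiding permutations `π` of length `n`
with endpoint deficiencies `n - π₁ ≤ u` and `n - πₙ ≤ v` (entries are the 1-based values). -/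
noncomputable def Tcount (m : ℕ) (u v : WithTop ℤ) (n : ℕ) : ℕ :=
  Nat.card {π : Equiv.Perm (Fin n) // Avoids132 π ∧ MBounded m π ∧
    (∀ h : 0 < n, (((n : ℤ) - ((((π ⟨0, h⟩ : Fin n) : ℕ) : ℤ) + 1) : ℤ) : WithTop ℤ) ≤ u) ∧
    (∀ h : 0 < n, (((n : ℤ) - ((((π ⟨n - 1, by omega⟩ : Fin n) : ℕ) : ℤ) + 1) : ℤ) : WithTop ℤ) ≤ v)}

/-- `c_{k,p}`: the number of standardized left blocks, i.e. `c_{1,p} = 1` and for `k ≥ 2` the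
number of 132-avoiding `σ` of length `k-1` with `k - σ₁ ≤ p`. -/
noncomputable def ckp (k : ℕ) (p : WithTop ℤ) : ℕ :=
  if h : k ≤ 1 then 1
  else Nat.card {σ : Equiv.Perm (Fin (k - 1)) // Avoids132 σ ∧
    (((k : ℤ) - ((((σ ⟨0, by omega⟩ : Fin (k - 1)) : ℕ) : ℤ) + 1) : ℤ) : WithTop ℤ) ≤ p}

/-- The state space `B_m²`, with `none` playing the role of `∞`. -/
abbrev StM (m : ℕ) := Option (Fin m) × Option (Fin m)

/-- Interpretation of a state coordinate as a threshold in `WithTop ℤ`. -/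
def thr {m : ℕ} (o : Option (Fin m)) : WithTop ℤ :=
  Option.elim o ⊤ (fun j => (((j : ℕ) : ℤ) : WithTop ℤ))

/-- The entry of the matrix `W_m(x)` in row `pq`, column `rs`:
`Σ_{k=1}^m c_{k,p} x^k [(r,s) = (m-k, q-k)] + x [(r,s) = (p-1, m-1)]`. -/
noncomputable def Went (m : ℕ) (pq rs : StM m) : Polynomial ℤ :=
  (∑ k ∈ Finset.Icc 1 m,
    if thr rs.1 = ((((m : ℤ) - (k : ℤ)) : ℤ) : WithTop ℤ) ∧ thr rs.2 = wsub (thr pq.2) k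
    then Polynomial.C ((ckp k (thr pq.1) : ℤ)) * Polynomial.X ^ k else 0)
  + (if thr rs.1 = wsub (thr pq.1) 1 ∧ thr rs.2 = ((((m : ℤ) - 1) : ℤ) : WithTop ℤ)
     then Polynomial.X else 0)

/-- The dependency graph `Γ_m`: edge from `src` to `tgt` iff the `(tgt, src)` entry of
`W_m(x)` is a nonzero polynomial. -/
def EdgeG (m : ℕ) (src tgt : StM m) : Prop := Went m tgt src ≠ 0

/-- Reachability in `Γ_m`. -/
def ReachG (m : ℕ) : StM m → StM m → Prop := Relation.ReflTransGen (EdgeG m)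

/-- The strongly connected component of a vertex: all mutually reachable vertices. -/
def SCCof (m : ℕ) (a : StM m) : Set (StM m) := {b | ReachG m a b ∧ ReachG m b a}

/-- A set is a strongly connected component iff it is the component of some vertex. -/
def IsSCC (m : ℕ) (C : Set (StM m)) : Prop := ∃ a, C = SCCof m a

/-- A strongly connected component is cyclic iff it contains a directed cycle. -/
def CyclicSCC (m : ℕ) (C : Set (StM m)) : Prop :=
  IsSCC m C ∧ ∃ a ∈ C, ∃ b, EdgeG m a b ∧ ReachG m b a

/-- `U_m = {(p, ∞) : 0 ≤ p ≤ m-1}`. -/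
def Uset (m : ℕ) : Set (StM m) := {x | ∃ p : Fin m, x = (some p, none)}

/-- `V_m = {(p,q) : 0 ≤ q < p ≤ m-1} ∪ {(p, m-1) : 0 ≤ p ≤ m-2}`. -/
def Vset (m : ℕ) : Set (StM m) :=
  {x | ∃ p q : Fin m, x = (some p, some q) ∧
    ((q : ℕ) < (p : ℕ) ∨ ((p : ℕ) + 2 ≤ m ∧ (q : ℕ) = m - 1))}

/-- The state `(∞, m-1)` of the singleton component `I_m`. -/
def iSt (m : ℕ) : StM m := (none, if h : 0 < m then some ⟨m - 1, by omega⟩ else none)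

/-- Walks in a weighted directed multigraph given by a step relation
`step a b e` ("there is an edge `a → b` of weight `e`"); `WWalk step a b w` means
there is a directed walk from `a` to `b` of total weight `w`. -/
inductive WWalk {V : Type*} (step : V → V → ℕ → Prop) : V → V → ℕ → Prop
  | refl (a : V) : WWalk step a a 0
  | cons {a b c : V} {e w : ℕ} : step a b e → WWalk step b c w → WWalk step a c (e + w)

/-- The weighted multigraph of a polynomial matrix: an edge `c → d` of weight `e`
whenever the coefficient of `x^e` in the entry `W_{d,c}` is positive. -/
def mstep {ι : Type*} (W : Matrix ι ι (Polynomial ℤ)) (c d : ι) (e : ℕ) : Prop :=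
  0 < (W d c).coeff e

/-- Weighted aperiodicity: the gcd of the total weights of all directed closed walks is 1. -/
def WAperiodic {ι : Type*} (W : Matrix ι ι (Polynomial ℤ)) : Prop :=
  ∀ g : ℕ, (∀ a : ι, ∀ w : ℕ, WWalk (mstep W) a a w → g ∣ w) → g = 1

/-- The component matrix `W_{U_m}(x)`: the `m × m` matrix indexed by `p, r ∈ {0, …, m-1}`
with `(p, r)` entry `c_{m-r, p} x^{m-r}`. -/
noncomputable def WU (m : ℕ) : Matrix (Fin m) (Fin m) (Polynomial ℤ) :=
  Matrix.of fun p r =>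
    Polynomial.C ((ckp (m - (r : ℕ)) ((((p : ℕ) : ℤ)) : WithTop ℤ) : ℤ)) *
      Polynomial.X ^ (m - (r : ℕ))

/-- The component matrix `W_{V_m}(x)`: the principal submatrix of `W_m(x)` indexed by `V_m`. -/
noncomputable def WVmat (m : ℕ) : Matrix (Vset m) (Vset m) (Polynomial ℤ) :=
  Matrix.of fun a b => Went m (a : StM m) (b : StM m)

theorem aux_sum_nonneg (m : ℕ) (a b : StM m) (k : ℕ) :
    0 ≤ (if thr b.1 = ((((m : ℤ) - (k : ℤ)) : ℤ) : WithTop ℤ) ∧ thr b.2 = wsub (thr a.2) k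
      then Polynomial.C ((ckp k (thr a.1) : ℤ)) * Polynomial.X ^ k else 0 : Polynomial ℤ).coeff 1 := by
  split_ifs
  · rw [Polynomial.coeff_C_mul, Polynomial.coeff_X_pow]
    split_ifs <;> simp
  · simp

theorem aux_stepB (m : ℕ) (a b : StM m)
    (h : thr b.1 = wsub (thr a.1) 1 ∧ thr b.2 = ((((m : ℤ) - 1) : ℤ) : WithTop ℤ)) :
    0 < (Went m a b).coeff 1 := by
  unfold Went
  rw [Polynomial.coeff_add, if_pos h, Polynomial.finsetSum_coeff, Polynomial.coeff_X_one]
  have := Finset.sum_nonneg (fun k (_ : k ∈ Finset.Icc 1 m) => aux_sum_nonneg m a b k)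
  linarith

theorem aux_stepA (m : ℕ) (hm : 1 ≤ m) (a b : StM m)
    (h : thr b.1 = ((((m : ℤ) - ((1 : ℕ) : ℤ)) : ℤ) : WithTop ℤ) ∧ thr b.2 = wsub (thr a.2) 1) :
    0 < (Went m a b).coeff 1 := by
  unfold Went
  rw [Polynomial.coeff_add, Polynomial.finsetSum_coeff]
  have h1 := Finset.single_le_sum (fun k (_ : k ∈ Finset.Icc 1 m) => aux_sum_nonneg m a b k)
    (Finset.mem_Icc.2 ⟨le_refl 1, hm⟩)
  rw [if_pos h] at h1
  have h2 : (Polynomial.C ((ckp 1 (thr a.1) : ℤ)) * Polynomial.X ^ 1).coeff 1 = (1 : ℤ) := by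
    simp [ckp]
  rw [h2] at h1
  have h3 : 0 ≤ (if thr b.1 = wsub (thr a.1) 1 ∧ thr b.2 = ((((m : ℤ) - 1) : ℤ) : WithTop ℤ)
     then Polynomial.X else 0 : Polynomial ℤ).coeff 1 := by
    split_ifs <;> simp
  linarith

theorem weighted_aperiodicity :
    (∀ m : ℕ, 2 ≤ m → WAperiodic (WU m)) ∧
    (∀ m : ℕ, 3 ≤ m → WAperiodic (WVmat m)) := by
  constructor
  · intro m hm g hg
    have h : WWalk (mstep (WU m)) ⟨m - 1, by omega⟩ ⟨m - 1, by omega⟩ (1 + 0) := by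
      refine WWalk.cons ?_ (WWalk.refl _)
      have e : m - (m - 1) = 1 := by omega
      have h1 : ∀ p, ckp 1 p = 1 := fun p => by simp [ckp]
      simp only [mstep, WU, Matrix.of_apply, e, h1]
      simp
    simpa using hg _ _ h
  · intro m hm g hg
    obtain ⟨n, rfl⟩ : ∃ n, m = n + 3 := ⟨m - 3, by omega⟩
    let a : Vset (n + 3) := ⟨(some ⟨n + 2, by omega⟩, some ⟨n + 1, by omega⟩),
      _, _, rfl, by simp⟩
    let b : Vset (n + 3) := ⟨(some ⟨n + 1, by omega⟩, some ⟨n + 2, by omega⟩),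
      _, _, rfl, by simp⟩
    let c : Vset (n + 3) := ⟨(some ⟨n + 2, by omega⟩, some ⟨n, by omega⟩),
      _, _, rfl, by simp⟩
    have hba : mstep (WVmat (n + 3)) b a 1 := by
      refine aux_stepB _ _ _ ⟨?_, ?_⟩ <;> simp only [a, b, thr, wsub, Option.elim, WithTop.map_coe] <;>
        congr 1 <;> push_cast <;> ring
    have hbc : mstep (WVmat (n + 3)) b c 1 := by
      refine aux_stepB _ _ _ ⟨?_, ?_⟩ <;> simp only [c, b, thr, wsub, Option.elim, WithTop.map_coe] <;>
        congr 1 <;> push_cast <;> ring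
    have hab : mstep (WVmat (n + 3)) a b 1 := by
      refine aux_stepA _ (by omega) _ _ ⟨?_, ?_⟩ <;>
        simp only [a, b, thr, wsub, Option.elim, WithTop.map_coe] <;>
        congr 1 <;> push_cast <;> ring
    have hca : mstep (WVmat (n + 3)) c a 1 := by
      refine aux_stepA _ (by omega) _ _ ⟨?_, ?_⟩ <;>
        simp only [a, c, thr, wsub, Option.elim, WithTop.map_coe] <;>
        congr 1 <;> push_cast <;> ring
    have h2 := hg _ _ (WWalk.cons hab (WWalk.cons hba (WWalk.refl _)))
    have h3 := hg _ _ (WWalk.cons hab (WWalk.cons hbc (WWalk.cons hca (WWalk.refl _))))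
    have h1 := Nat.dvd_sub h3 h2
    simpa using h1
end

section
/- The polynomial H(x) = x⁵ − x⁴ − x³ + x² − 2x + 1 is strictly decreasing on [0,1] and has a unique real zero ρ₃ in the interval (0,1). Moreover, a_n^{(3)} ∼ κ₃ ρ₃^{−n} as n → ∞, i.e., lim_{n→∞} a_n^{(3)} ρ₃^{n} = κ₃, where κ₃ = −N₃(ρ₃) / (ρ₃ · D₃′(ρ₃)), with N₃(x) = 1 − x − x² + x³ + 4x⁴ − 4x⁶ − 3x⁷ − 3x⁸ − 5x⁹ − 3x¹⁰ + 2x¹¹ + 2x¹² and D₃(x) = 1 − 2x − x² + x³ + x⁴ + 2x⁵ + 2x⁶ + 2x⁷ − 4x⁸ − 2x⁹ + x¹⁰ − 2x¹¹ + x¹³. -/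
/-- The numerator `N₃(x)` of `A^{(3)}(x)`. -/
noncomputable def N3poly : Polynomial ℝ :=
  1 - Polynomial.X - Polynomial.X ^ 2 + Polynomial.X ^ 3 + 4 * Polynomial.X ^ 4
    - 4 * Polynomial.X ^ 6 - 3 * Polynomial.X ^ 7 - 3 * Polynomial.X ^ 8
    - 5 * Polynomial.X ^ 9 - 3 * Polynomial.X ^ 10 + 2 * Polynomial.X ^ 11
    + 2 * Polynomial.X ^ 12

/-- The denominator `D₃(x)` of `A^{(3)}(x)`. -/
noncomputable def D3poly : Polynomial ℝ :=
  1 - 2 * Polynomial.X - Polynomial.X ^ 2 + Polynomial.X ^ 3 + Polynomial.X ^ 4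
    + 2 * Polynomial.X ^ 5 + 2 * Polynomial.X ^ 6 + 2 * Polynomial.X ^ 7
    - 4 * Polynomial.X ^ 8 - 2 * Polynomial.X ^ 9 + Polynomial.X ^ 10
    - 2 * Polynomial.X ^ 11 + Polynomial.X ^ 13


namespace Bdd

/-- 132-avoidance for a triple of values. -/
def TP (a b c : ℕ) : Prop := ¬ (a < c ∧ c < b)

/-- Adjacent values are close. -/
def CR (a b : ℕ) : Prop := a ≤ b + 3 ∧ b ≤ a + 3

/-- Valid words of length `k - 2`. -/
structure Good (k : ℕ) (l : List ℕ) : Prop where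
  nd : l.Nodup
  mem : ∀ x, x ∈ l ↔ x + 2 < k
  av : l.Triplewise TP
  ch : l.IsChain CR

lemma pw_top {l : List ℕ} {m : ℕ} (h : ∀ x ∈ l, x ≤ m) : l.Pairwise (TP m) := by
  refine List.Pairwise.imp_of_mem (R := fun _ _ => True) ?_ (List.pairwise_of_forall (fun _ _ => trivial))
  intro a b _ hb _ hh
  have := h b hb
  omega

lemma pw_top' {l : List ℕ} {m : ℕ} (h : ∀ x ∈ l, x ≤ m) :
    l.Pairwise (fun x y => TP x y m) := by
  refine List.Pairwise.imp_of_mem (R := fun _ _ => True) ?_ (List.pairwise_of_forall (fun _ _ => trivial))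
  intro a b _ hb _ hh
  have := h b hb
  omega

lemma good_snoc {k e z : ℕ} {L : List ℕ} (hL : Good (k + 3) L) (hz : L.getLast? = some z)
    (h1 : z + e + 3 = k + 3) (he : e ≤ 2) : Good (k + 4) (L ++ [k + 1]) := by
  have hm := hL.mem
  refine ⟨?_, ?_, ?_, ?_⟩
  · rw [List.nodup_append]
    refine ⟨hL.nd, by simp, ?_⟩
    intro a ha b hb
    have := (hm a).1 ha
    simp at hb
    omega
  · intro x
    simp [hm x]
    omega
  · rw [List.triplewise_append]
    refine ⟨hL.av, by simp, by simp, ?_⟩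
    intro a ha
    simp at ha
    subst ha
    apply pw_top'
    intro x hx
    have := (hm x).1 hx
    omega
  · rw [List.isChain_append]
    refine ⟨hL.ch, by simp, ?_⟩
    intro x hx y hy
    simp [hz] at hx hy
    unfold CR
    omega

lemma good_cons0 {k d h : ℕ} {R : List ℕ} (hR : Good (k + 3) R) (hh : R.head? = some h)
    (h1 : h + d + 3 = k + 3) (hd : d ≤ 2) : Good (k + 4) ((k + 1) :: R) := by
  have hm := hR.mem
  refine ⟨?_, ?_, ?_, ?_⟩
  · rw [List.nodup_cons]
    refine ⟨?_, hR.nd⟩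
    rw [hm]; omega
  · intro x
    simp [hm x]
    omega
  · rw [List.triplewise_cons]
    refine ⟨?_, hR.av⟩
    apply pw_top
    intro x hx
    have := (hm x).1 hx
    omega
  · rw [List.isChain_cons]
    refine ⟨?_, hR.ch⟩
    intro y hy
    simp [hh] at hy
    unfold CR
    omega

lemma good_cons1 {k d h : ℕ} {R : List ℕ} (hR : Good (k + 2) R) (hh : R.head? = some h)
    (h1 : h + d + 3 = k + 2) (hd : d ≤ 1) : Good (k + 4) (k :: (k + 1) :: R) := by
  have hm := hR.mem
  refine ⟨?_, ?_, ?_, ?_⟩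
  · simp only [List.nodup_cons, List.mem_cons, hm]
    refine ⟨by omega, by omega, hR.nd⟩
  · intro x
    simp [hm x]
    omega
  · simp only [List.triplewise_cons, List.pairwise_cons]
    refine ⟨⟨?_, ?_⟩, ?_, hR.av⟩
    · intro a ha
      have := (hm a).1 ha
      unfold TP; omega
    · apply pw_top
      intro x hx
      have := (hm x).1 hx
      omega
    · apply pw_top
      intro x hx
      have := (hm x).1 hx
      omega
  · rw [List.isChain_cons_cons, List.isChain_cons]
    refine ⟨by unfold CR; omega, ?_, hR.ch⟩
    intro y hy
    simp [hh] at hy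
    unfold CR
    omega

lemma good_cons2 {k d h u v : ℕ} {R : List ℕ} (hR : Good (k + 1) R) (hh : R.head? = some h)
    (h1 : h + d + 3 = k + 1) (hd : d ≤ 0) (huv : u = k ∧ v = k - 1 ∨ u = k - 1 ∧ v = k) :
    Good (k + 4) (u :: v :: (k + 1) :: R) := by
  have hm := hR.mem
  refine ⟨?_, ?_, ?_, ?_⟩
  · simp only [List.nodup_cons, List.mem_cons, hm]
    refine ⟨by omega, by omega, by omega, hR.nd⟩
  · intro x
    simp [hm x]
    omega
  · simp only [List.triplewise_cons, List.pairwise_cons, List.mem_cons]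
    refine ⟨⟨?_, ?_, ?_⟩, ⟨?_, ?_⟩, ?_, hR.av⟩
    · rintro a (ha | ha)
      · unfold TP; omega
      · have := (hm a).1 ha
        unfold TP; omega
    · intro a ha
      have := (hm a).1 ha
      unfold TP; omega
    · apply pw_top
      intro x hx
      have := (hm x).1 hx
      omega
    · intro a ha
      have := (hm a).1 ha
      unfold TP; omega
    · apply pw_top
      intro x hx
      have := (hm x).1 hx
      omega
    · apply pw_top
      intro x hx
      have := (hm x).1 hx
      omega
  · rw [List.isChain_cons_cons, List.isChain_cons_cons, List.isChain_cons]
    refine ⟨by unfold CR; omega, by unfold CR; omega, ?_, hR.ch⟩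
    intro y hy
    simp [hh] at hy
    unfold CR
    omega

/-- Structure of valid words. -/
lemma good_cases {k : ℕ} {l : List ℕ} (hl : Good (k + 4) l) :
    (∃ L, Good (k + 3) L ∧ l = L ++ [k + 1] ∧ ∀ z ∈ L.getLast?, k ≤ z + 2) ∨
    (∃ h R, Good (k + 3) (h :: R) ∧ l = (k + 1) :: h :: R ∧ k ≤ h + 2) ∨
    (∃ h R, Good (k + 2) (h :: R) ∧ l = k :: (k + 1) :: h :: R ∧ k ≤ h + 2) ∨
    (∃ h R u v, Good (k + 1) (h :: R) ∧ l = u :: v :: (k + 1) :: h :: R ∧ k ≤ h + 2 ∧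
      (u = k ∧ v = k - 1 ∨ u = k - 1 ∧ v = k)) := by
  obtain ⟨hnd, hm, hav, hch⟩ := hl
  obtain ⟨L, R, rfl⟩ := List.append_of_mem ((hm (k + 1)).2 (by omega))
  simp only [List.mem_append, List.mem_cons] at hm
  rw [List.nodup_append, List.nodup_cons] at hnd
  obtain ⟨ndL, ⟨kR, ndR⟩, dis⟩ := hnd
  have kL : k + 1 ∉ L := fun h => dis _ h (k + 1) (by simp) rfl
  rw [List.triplewise_append, List.triplewise_cons] at hav
  obtain ⟨avL, ⟨-, avR⟩, av1, -⟩ := hav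
  rw [List.isChain_append, List.isChain_cons] at hch
  obtain ⟨chL, ⟨ch1, chR⟩, ch2⟩ := hch
  have gt : ∀ x ∈ L, ∀ y ∈ R, y < x := by
    intro x hx y hy
    have h1 := av1 x hx
    rw [List.pairwise_cons] at h1
    have h2 := h1.1 y hy
    have h3 := dis x hx y (by simp [hy])
    have h4 := (hm y).1 (by simp [hy])
    have h5 : y ≠ k + 1 := fun h => kR (h ▸ hy)
    unfold TP at h2
    omega
  cases R with
  | nil =>
    left
    refine ⟨L, ⟨ndL, ?_, avL, chL⟩, rfl, ?_⟩
    · intro x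
      have := hm x
      simp at this
      constructor
      · intro hx
        have h5 : x ≠ k + 1 := fun h => kL (h ▸ hx)
        have := this.1 (Or.inl hx)
        omega
      · intro hx
        rcases this.2 (by omega) with h | h
        · exact h
        · omega
    · intro z hz
      have := ch2 z hz (k + 1) (by simp)
      unfold CR at this
      omega
  | cons h R =>
    right
    have hh : k ≤ h + 2 := by
      have := ch1 h (by simp)
      unfold CR at this
      omega
    have hLlt : ∀ x ∈ L, h < x ∧ x ≤ k := by
      intro x hx
      have h1 := gt x hx h (by simp)
      have h2 := (hm x).1 (by simp [hx])
      have h5 : x ≠ k + 1 := fun h => kL (h ▸ hx)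
      omega
    have hRlt : ∀ x ∈ h :: R, x ≤ k := by
      intro x hx
      have h2 := (hm x).1 (by simp only [hx]; simp)
      have h5 : x ≠ k + 1 := fun h => kR (h ▸ hx)
      omega
    have key : ∀ x, x ≤ k → x ∈ L ∨ x ∈ h :: R := by
      intro x hx
      rcases (hm x).2 (by omega) with h | h | h
      · exact Or.inl h
      · omega
      · exact Or.inr h
    have hhk := hRlt h (by simp)
    have hdis : ∀ x ∈ L, x ∉ h :: R := fun x hx hx' => by
      have := gt x hx x hx'
      omega
    match L with
    | [] =>
      left
      refine ⟨h, R, ⟨ndR, ?_, avR, chR⟩, rfl, hh⟩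
      intro x
      constructor
      · intro hx
        have := hRlt x hx
        omega
      · intro hx
        rcases key x (by omega) with h | h
        · simp at h
        · exact h
    | [u] =>
      right; left
      have hu := hLlt u (by simp)
      have hgu := gt u (by simp)
      have huk : u = k := by
        rcases key k le_rfl with h1 | h1
        · simp at h1; exact h1.symm
        · have := hgu k h1
          omega
      subst huk
      refine ⟨h, R, ⟨ndR, ?_, avR, chR⟩, rfl, hh⟩
      intro x
      constructor
      · intro hx
        have := hgu x hx
        omega
      · intro hx
        rcases key x (by omega) with h | h
        · simp at h
          omega
        · exact h
    | [u, v] =>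
      right; right
      have hu := hLlt u (by simp)
      have hv := hLlt v (by simp)
      have huv : u ≠ v := by
        simp at ndL
        exact ndL
      have hgu := gt u (by simp)
      have hgv := gt v (by simp)
      refine ⟨h, R, u, v, ⟨ndR, ?_, avR, chR⟩, rfl, hh, by omega⟩
      intro x
      constructor
      · intro hx
        have := hgu x hx
        have := hgv x hx
        omega
      · intro hx
        rcases key x (by omega) with h | h
        · simp at h
          omega
        · exact h
    | u :: v :: w :: L' =>
      exfalso
      have hu := hLlt u (by simp)
      have hv := hLlt v (by simp)
      have hw := hLlt w (by simp)
      simp at ndL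
      omega

/-- Generation of valid words with statistics. -/
def G : ℕ → List (ℕ × ℕ × List ℕ)
  | 0 => []
  | 1 => []
  | 2 => []
  | 3 => [(0, 0, [0])]
  | k + 4 =>
    ((G (k + 3)).filter (fun t => t.2.1 ≤ 2)).map (fun t => (t.1 + 1, 0, t.2.2 ++ [k + 1]))
    ++ (((G (k + 3)).filter (fun t => t.1 ≤ 2)).map (fun t => (0, t.2.1 + 1, (k + 1) :: t.2.2))
    ++ (((G (k + 2)).filter (fun t => t.1 ≤ 1)).map
          (fun t => (1, t.2.1 + 2, k :: (k + 1) :: t.2.2))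
    ++ (((G (k + 1)).filter (fun t => t.1 ≤ 0)).map
          (fun t => (1, t.2.1 + 3, k :: (k - 1) :: (k + 1) :: t.2.2))
    ++ ((G (k + 1)).filter (fun t => t.1 ≤ 0)).map
          (fun t => (2, t.2.1 + 3, (k - 1) :: k :: (k + 1) :: t.2.2)))))

structure Inv (k : ℕ) (t : ℕ × ℕ × List ℕ) : Prop where
  good : Good k t.2.2
  hd : ∃ h, t.2.2.head? = some h ∧ h + t.1 + 3 = k
  lst : ∃ z, t.2.2.getLast? = some z ∧ z + t.2.1 + 3 = k

lemma G_sound (k : ℕ) : ∀ t ∈ G k, Inv k t := by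
  induction k using Nat.strong_induction_on with
  | _ k ih =>
  match k, ih with
  | 0, _ => simp [G]
  | 1, _ => simp [G]
  | 2, _ => simp [G]
  | 3, _ =>
    intro t ht
    simp [G] at ht
    subst ht
    refine ⟨⟨by simp, fun x => by simp; omega, by simp, by simp⟩, ⟨0, by simp⟩, ⟨0, by simp⟩⟩
  | k + 4, ih =>
    intro t ht
    simp only [G, List.mem_append, List.mem_map, List.mem_filter, decide_eq_true_eq] at ht
    rcases ht with ⟨⟨d, e, l⟩, ⟨hs, hc⟩, rfl⟩ | ⟨⟨d, e, l⟩, ⟨hs, hc⟩, rfl⟩ |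
      ⟨⟨d, e, l⟩, ⟨hs, hc⟩, rfl⟩ | ⟨⟨d, e, l⟩, ⟨hs, hc⟩, rfl⟩ | ⟨⟨d, e, l⟩, ⟨hs, hc⟩, rfl⟩
    · obtain ⟨g, ⟨h, h1, h2⟩, ⟨z, z1, z2⟩⟩ := ih (k + 3) (by omega) _ hs
      dsimp at *
      refine ⟨good_snoc g z1 z2 hc, ⟨h, ?_, ?_⟩, ⟨k + 1, ?_, ?_⟩⟩ <;> simp [h1] <;> omega
    · obtain ⟨g, ⟨h, h1, h2⟩, ⟨z, z1, z2⟩⟩ := ih (k + 3) (by omega) _ hs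
      dsimp at *
      refine ⟨good_cons0 g h1 h2 hc, ⟨k + 1, ?_, ?_⟩, ⟨z, ?_, ?_⟩⟩ <;>
        simp [List.getLast?_cons, z1] <;> omega
    · obtain ⟨g, ⟨h, h1, h2⟩, ⟨z, z1, z2⟩⟩ := ih (k + 2) (by omega) _ hs
      dsimp at *
      refine ⟨good_cons1 g h1 h2 hc, ⟨k, ?_, ?_⟩, ⟨z, ?_, ?_⟩⟩ <;>
        simp [List.getLast?_cons, z1] <;> omega
    · obtain ⟨g, ⟨h, h1, h2⟩, ⟨z, z1, z2⟩⟩ := ih (k + 1) (by omega) _ hs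
      dsimp at *
      refine ⟨good_cons2 g h1 h2 hc (Or.inl ⟨rfl, rfl⟩), ⟨k, ?_, ?_⟩, ⟨z, ?_, ?_⟩⟩ <;>
        simp [List.getLast?_cons, z1] <;> omega
    · obtain ⟨g, ⟨h, h1, h2⟩, ⟨z, z1, z2⟩⟩ := ih (k + 1) (by omega) _ hs
      dsimp at *
      refine ⟨good_cons2 g h1 h2 hc (Or.inr ⟨rfl, rfl⟩), ⟨k - 1, ?_, ?_⟩, ⟨z, ?_, ?_⟩⟩ <;>
        simp [List.getLast?_cons, z1] <;> omega

lemma G_complete (k : ℕ) : ∀ l, l ≠ [] → Good k l → ∃ t ∈ G k, t.2.2 = l := by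
  induction k using Nat.strong_induction_on with
  | _ k ih =>
  match k, ih with
  | 0, _ | 1, _ | 2, _ =>
    intro l hl h
    exfalso
    obtain ⟨x, hx⟩ := List.exists_mem_of_ne_nil l hl
    have := (h.mem x).1 hx
    omega
  | 3, _ =>
    intro l hl h
    refine ⟨(0, 0, [0]), by simp [G], ?_⟩
    have hm := h.mem
    have nd := h.nd
    match l with
    | [] => simp at hl
    | [a] =>
      have := (hm a).1 (by simp)
      simp; omega
    | a :: b :: l =>
      have := (hm a).1 (by simp)
      have := (hm b).1 (by simp)
      simp at nd
      omega
  | k + 4, ih =>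
    intro l hl h
    simp only [G, List.mem_append, List.mem_map, List.mem_filter, decide_eq_true_eq]
    rcases good_cases h with ⟨L, g, rfl, c⟩ | ⟨h, R, g, rfl, c⟩ | ⟨h, R, g, rfl, c⟩ |
      ⟨h, R, u, v, g, rfl, c, c2⟩
    · have hL : L ≠ [] := by
        rintro rfl
        have := (g.mem 0).2 (by omega)
        simp at this
      obtain ⟨t, ht, rfl⟩ := ih (k + 3) (by omega) L hL g
      obtain ⟨-, -, ⟨z, z1, z2⟩⟩ := G_sound _ _ ht
      have := c z z1
      exact ⟨_, Or.inl ⟨t, ⟨ht, by omega⟩, rfl⟩, rfl⟩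
    · obtain ⟨t, ht, e⟩ := ih (k + 3) (by omega) _ (by simp) g
      obtain ⟨-, ⟨z, z1, z2⟩, -⟩ := G_sound _ _ ht
      simp [e] at z1
      refine ⟨_, Or.inr (Or.inl ⟨t, ⟨ht, by omega⟩, rfl⟩), by simp [e]⟩
    · obtain ⟨t, ht, e⟩ := ih (k + 2) (by omega) _ (by simp) g
      obtain ⟨-, ⟨z, z1, z2⟩, -⟩ := G_sound _ _ ht
      simp [e] at z1
      refine ⟨_, Or.inr (Or.inr (Or.inl ⟨t, ⟨ht, by omega⟩, rfl⟩)), by simp [e]⟩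
    · obtain ⟨t, ht, e⟩ := ih (k + 1) (by omega) _ (by simp) g
      obtain ⟨-, ⟨z, z1, z2⟩, -⟩ := G_sound _ _ ht
      simp [e] at z1
      rcases c2 with ⟨rfl, rfl⟩ | ⟨rfl, rfl⟩
      · refine ⟨_, Or.inr (Or.inr (Or.inr (Or.inl ⟨t, ⟨ht, by omega⟩, rfl⟩))), by simp [e]⟩
      · refine ⟨_, Or.inr (Or.inr (Or.inr (Or.inr ⟨t, ⟨ht, by omega⟩, rfl⟩))), by simp [e]⟩

lemma nodup_aux {X : List (ℕ × ℕ × List ℕ)} (hX : (X.map (fun t => t.2.2)).Nodup)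
    (p : ℕ × ℕ × List ℕ → Bool) (f : List ℕ → List ℕ) (hf : Function.Injective f) :
    ((X.filter p).map (fun t => f t.2.2)).Nodup := by
  have h1 : ((X.filter p).map (fun t => t.2.2)).Nodup :=
    hX.sublist (List.filter_sublist.map _)
  have := h1.map hf
  simpa [List.map_map, Function.comp_def] using this

lemma G_nodup (k : ℕ) : ((G k).map (fun t => t.2.2)).Nodup := by
  induction k using Nat.strong_induction_on with
  | _ k ih =>
  match k, ih with
  | 0, _ => simp [G]
  | 1, _ => simp [G]
  | 2, _ => simp [G]
  | 3, _ => simp [G]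
  | k + 4, ih =>
    have s1 := G_sound (k + 1)
    have s2 := G_sound (k + 2)
    have s3 := G_sound (k + 3)
    have i1 := ih (k + 1) (by omega)
    have i2 := ih (k + 2) (by omega)
    have i3 := ih (k + 3) (by omega)
    have hk : ∀ t ∈ G (k + 1), 2 ≤ k := by
      intro t ht
      obtain ⟨-, ⟨h, h1, h2⟩, -⟩ := s1 t ht
      omega
    simp only [G, List.map_append, List.map_map, Function.comp_def]
    rw [List.nodup_append', List.nodup_append', List.nodup_append', List.nodup_append']
    refine ⟨nodup_aux i3 _ (fun l => l ++ [k + 1]) (List.append_left_injective _), ⟨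
      nodup_aux i3 _ (fun l => (k + 1) :: l) (by intro a b h; simpa using h), ⟨
      nodup_aux i2 _ (fun l => k :: (k + 1) :: l) (by intro a b h; simpa using h), ⟨
      nodup_aux i1 _ (fun l => k :: (k - 1) :: (k + 1) :: l) (by intro a b h; simpa using h),
      nodup_aux i1 _ (fun l => (k - 1) :: k :: (k + 1) :: l) (by intro a b h; simpa using h),
      ?_⟩, ?_⟩, ?_⟩, ?_⟩
    · intro l h1 h2
      simp only [List.mem_map, List.mem_filter] at h1 h2
      obtain ⟨t, ⟨ht, -⟩, rfl⟩ := h1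
      obtain ⟨t', ⟨ht', -⟩, e⟩ := h2
      have := hk t ht
      simp at e
      omega
    · intro l h1 h2
      simp only [List.mem_append, List.mem_map, List.mem_filter] at h1 h2
      obtain ⟨t, ⟨ht, -⟩, rfl⟩ := h1
      rcases h2 with ⟨t', ⟨ht', -⟩, e⟩ | ⟨t', ⟨ht', -⟩, e⟩ <;>
      · have := hk t' ht'
        simp at e
        try omega
    · intro l h1 h2
      simp only [List.mem_append, List.mem_map, List.mem_filter] at h1 h2
      obtain ⟨t, ⟨ht, -⟩, rfl⟩ := h1
      rcases h2 with ⟨t', ⟨ht', -⟩, e⟩ | ⟨t', ⟨ht', -⟩, e⟩ | ⟨t', ⟨ht', -⟩, e⟩ <;>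
      · simp at e
        try omega
    · intro l h1 h2
      simp only [List.mem_append, List.mem_map, List.mem_filter] at h1 h2
      obtain ⟨t, ⟨ht, -⟩, rfl⟩ := h1
      have fin : ∀ j ≤ k + 3, ∀ t' ∈ G j, ∀ a : List ℕ, a ++ t'.2.2 = t.2.2 ++ [k + 1] → False := by
        intro j hj t' ht' a e
        obtain ⟨-, -, ⟨z, z1, z2⟩⟩ := G_sound _ _ ht'
        have := congrArg List.getLast? e
        simp [z1] at this
        omega
      rcases h2 with ⟨t', ⟨ht', -⟩, e⟩ | ⟨t', ⟨ht', -⟩, e⟩ | ⟨t', ⟨ht', -⟩, e⟩ |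
        ⟨t', ⟨ht', -⟩, e⟩
      · exact fin _ (by omega) t' ht' [_] e
      · exact fin _ (by omega) t' ht' [_, _] e
      · exact fin _ (by omega) t' ht' [_, _, _] e
      · exact fin _ (by omega) t' ht' [_, _, _] e

lemma mem_G_iff (n : ℕ) (hn : 1 ≤ n) (l : List ℕ) :
    l ∈ (G (n + 2)).map (fun t => t.2.2) ↔ Good (n + 2) l := by
  rw [List.mem_map]
  constructor
  · rintro ⟨t, ht, rfl⟩
    exact (G_sound _ _ ht).good
  · intro h
    apply G_complete _ _ _ h
    rintro rfl
    have := (h.mem 0).2 (by omega)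
    simp at this

/-- The word of a permutation. -/
def word {n : ℕ} (π : Equiv.Perm (Fin n)) : List ℕ := List.ofFn (fun i => (π i : ℕ))

lemma word_inj {n : ℕ} : Function.Injective (word (n := n)) := by
  intro a b h
  have := List.ofFn_injective h
  ext i
  exact congrFun this i

lemma word_good {n : ℕ} (π : Equiv.Perm (Fin n)) :
    Good (n + 2) (word π) ↔ Avoids132 π ∧ MBounded 3 π := by
  have h1 : (word π).Triplewise TP ↔ Avoids132 π := by
    rw [List.triplewise_iff_getElem]
    simp only [word, List.getElem_ofFn, List.length_ofFn, Avoids132, TP]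
    constructor
    · rintro h ⟨i, j, k, hij, hjk, h2⟩
      exact h i j k hij hjk k.2 h2
    · intro h i j k hij hjk hk h2
      exact h ⟨⟨i, by omega⟩, ⟨j, by omega⟩, ⟨k, hk⟩, hij, hjk, h2⟩
  have h2 : (word π).IsChain CR ↔ MBounded 3 π := by
    rw [List.isChain_iff_getElem]
    simp only [word, List.getElem_ofFn, List.length_ofFn, MBounded, CR]
    refine forall_congr' fun i => forall_congr' fun hi => ?_
    rw [abs_le]
    push_cast
    omega
  rw [← h1, ← h2]
  constructor
  · intro h
    exact ⟨h.av, h.ch⟩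
  · rintro ⟨a, b⟩
    refine ⟨?_, ?_, a, b⟩
    · unfold word
      rw [List.nodup_ofFn]
      exact Fin.val_injective.comp π.injective
    · intro x
      simp only [word, List.mem_ofFn, Set.mem_range]
      constructor
      · rintro ⟨i, rfl⟩
        have := (π i).2
        omega
      · intro hx
        exact ⟨π.symm ⟨x, by omega⟩, by simp⟩

lemma good_word {n : ℕ} {l : List ℕ} (h : Good (n + 2) l) :
    ∃ π : Equiv.Perm (Fin n), word π = l := by
  have hlen : l.length = n := by
    have : l.toFinset = Finset.range n := by
      ext x
      simp [h.mem x]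
    rw [← List.toFinset_card_of_nodup h.nd, this, Finset.card_range]
  subst hlen
  let f : Fin l.length → Fin l.length := fun i => ⟨l[i], by
    have := (h.mem l[i]).1 (by simp)
    omega⟩
  have hf : Function.Injective f := by
    intro i j hij
    have h1 : l[i] = l[j] := congrArg Fin.val hij
    exact Fin.ext ((List.Nodup.getElem_inj_iff h.nd).1 h1)
  refine ⟨Equiv.ofBijective f (Finite.injective_iff_bijective.1 hf), ?_⟩
  unfold word
  apply List.ext_getElem
  · simp
  · intro i h1 h2
    simp [f]

lemma aCount_eq (n : ℕ) (hn : 1 ≤ n) : aCount 3 n = (G (n + 2)).length := by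
  classical
  have h1 : (G (n + 2)).length = (((G (n + 2)).map (fun t => t.2.2)).toFinset).card := by
    rw [List.toFinset_card_of_nodup (G_nodup _), List.length_map]
  have h2 : ∀ l, l ∈ ((G (n + 2)).map (fun t => t.2.2)).toFinset ↔ Good (n + 2) l := by
    intro l
    rw [List.mem_toFinset, mem_G_iff n hn]
  rw [h1, ← Set.ncard_coe_finset, aCount]
  have h3 : (((((G (n + 2)).map (fun t => t.2.2)).toFinset : Finset (List ℕ)) : Set (List ℕ)))
      = Set.image word {π : Equiv.Perm (Fin n) | Avoids132 π ∧ MBounded 3 π} := by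
    ext l
    rw [Finset.mem_coe, h2, Set.mem_image]
    constructor
    · intro h
      obtain ⟨π, rfl⟩ := good_word h
      exact ⟨π, (word_good π).1 h, rfl⟩
    · rintro ⟨π, h, rfl⟩
      exact (word_good π).2 h
  rw [h3, Set.ncard_image_of_injective _ word_inj]
  rfl

lemma aCount_zero : aCount 3 0 = 1 := by
  rw [aCount, Nat.card_eq_one_iff_unique]
  refine ⟨⟨fun a b => Subtype.ext (Subsingleton.elim _ _)⟩, ⟨⟨1, ?_, ?_⟩⟩⟩
  · rintro ⟨i, -⟩
    exact i.elim0
  · intro i h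
    omega

end Bdd

namespace Bdd

/-- Number of words whose statistics satisfy `p`. -/
def cnt (k : ℕ) (p : ℕ → ℕ → Bool) : ℕ := (G k).countP (fun t => p t.1 t.2.1)

lemma cnt_rec (k : ℕ) (p : ℕ → ℕ → Bool) :
    cnt (k + 4) p = cnt (k + 3) (fun d e => p (d + 1) 0 && decide (e ≤ 2))
      + (cnt (k + 3) (fun d e => p 0 (e + 1) && decide (d ≤ 2))
      + (cnt (k + 2) (fun d e => p 1 (e + 2) && decide (d ≤ 1))
      + (cnt (k + 1) (fun d e => p 1 (e + 3) && decide (d ≤ 0))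
      + cnt (k + 1) (fun d e => p 2 (e + 3) && decide (d ≤ 0))))) := by
  simp only [cnt, G, List.countP_append, List.countP_map, List.countP_filter, Function.comp_def]

lemma cnt_congr (k : ℕ) {p q : ℕ → ℕ → Bool} (h : ∀ d e, p d e = q d e) : cnt k p = cnt k q := by
  have : p = q := by
    funext d e
    exact h d e
  rw [this]

lemma cnt_false (k : ℕ) {p : ℕ → ℕ → Bool} (h : ∀ d e, p d e = false) : cnt k p = 0 := by
  simp [cnt, h]

def sA (k : ℕ) : ℕ := cnt k (fun _ _ => true)
def sT0 (k : ℕ) : ℕ := cnt k (fun d _ => decide (d ≤ 0))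
def sT1 (k : ℕ) : ℕ := cnt k (fun d _ => decide (d ≤ 1))
def sT2 (k : ℕ) : ℕ := cnt k (fun d _ => decide (d ≤ 2))
def sUi (k : ℕ) : ℕ := cnt k (fun _ e => decide (e ≤ 2))
def sU0 (k : ℕ) : ℕ := cnt k (fun d e => decide (d ≤ 0 ∧ e ≤ 2))
def sU1 (k : ℕ) : ℕ := cnt k (fun d e => decide (d ≤ 1 ∧ e ≤ 2))
def sV (k : ℕ) : ℕ := cnt k (fun d e => decide (d ≤ 2 ∧ e ≤ 1))
def sW1 (k : ℕ) : ℕ := cnt k (fun d e => decide (d ≤ 1 ∧ e ≤ 0))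
def sW2 (k : ℕ) : ℕ := cnt k (fun d e => decide (d ≤ 2 ∧ e ≤ 0))

lemma sA_rec (k : ℕ) : sA (k + 4) = sUi (k + 3) + sT2 (k + 3) + sT1 (k + 2) + 2 * sT0 (k + 1) := by
  simp only [sA, sUi, sT2, sT1, sT0]
  rw [cnt_rec]
  simp only [Bool.true_and]
  ring

lemma sT0_rec (k : ℕ) : sT0 (k + 4) = sT2 (k + 3) := by
  simp only [sT2, sT0]
  rw [cnt_rec]
  rw [cnt_false (k + 3) (p := fun d e => decide (d + 1 ≤ 0) && decide (e ≤ 2)) (by simp),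
    cnt_false (k + 2) (by simp), cnt_false (k + 1) (by simp), cnt_false (k + 1) (by simp)]
  simp

lemma sT1_rec (k : ℕ) : sT1 (k + 4) = sU0 (k + 3) + sT2 (k + 3) + sT1 (k + 2) + sT0 (k + 1) := by
  simp only [sT2, sT0, sT1, sU0]
  rw [cnt_rec]
  rw [cnt_congr (k + 3) (p := fun d e => decide (d + 1 ≤ 1) && decide (e ≤ 2))
    (q := fun d e => decide (d ≤ 0 ∧ e ≤ 2)) (by intro d e; rw [Bool.eq_iff_iff]; simp only [Bool.and_eq_true, decide_eq_true_eq]; omega),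
    cnt_false (k + 1) (p := fun d e => decide (2 ≤ 1) && decide (d ≤ 0)) (by simp)]
  simp
  ring

lemma sT2_rec (k : ℕ) : sT2 (k + 4) = sU1 (k + 3) + sT2 (k + 3) + sT1 (k + 2) + 2 * sT0 (k + 1) := by
  simp only [sT2, sT0, sT1, sU1]
  rw [cnt_rec]
  rw [cnt_congr (k + 3) (p := fun d e => decide (d + 1 ≤ 2) && decide (e ≤ 2))
    (q := fun d e => decide (d ≤ 1 ∧ e ≤ 2)) (by intro d e; rw [Bool.eq_iff_iff]; simp only [Bool.and_eq_true, decide_eq_true_eq]; omega)]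
  simp
  ring

lemma sUi_rec (k : ℕ) : sUi (k + 4) = sUi (k + 3) + sV (k + 3) + sW1 (k + 2) := by
  simp only [sUi, sV, sW1]
  rw [cnt_rec]
  rw [cnt_congr (k + 3) (p := fun d e => decide (e + 1 ≤ 2) && decide (d ≤ 2))
    (q := fun d e => decide (d ≤ 2 ∧ e ≤ 1)) (by intro d e; rw [Bool.eq_iff_iff]; simp only [Bool.and_eq_true, decide_eq_true_eq]; omega),
    cnt_congr (k + 2) (p := fun d e => decide (e + 2 ≤ 2) && decide (d ≤ 1))
    (q := fun d e => decide (d ≤ 1 ∧ e ≤ 0)) (by intro d e; rw [Bool.eq_iff_iff]; simp only [Bool.and_eq_true, decide_eq_true_eq]; omega),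
    cnt_false (k + 1) (by simp)]
  simp
  ring

lemma sU1_rec (k : ℕ) : sU1 (k + 4) = sU0 (k + 3) + sV (k + 3) + sW1 (k + 2) := by
  simp only [sU1, sU0, sV, sW1]
  rw [cnt_rec]
  rw [cnt_congr (k + 3) (p := fun d e => decide (d + 1 ≤ 1 ∧ 0 ≤ 2) && decide (e ≤ 2))
    (q := fun d e => decide (d ≤ 0 ∧ e ≤ 2)) (by intro d e; rw [Bool.eq_iff_iff]; simp only [Bool.and_eq_true, decide_eq_true_eq]; omega),
    cnt_congr (k + 3) (p := fun d e => decide (0 ≤ 1 ∧ e + 1 ≤ 2) && decide (d ≤ 2))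
    (q := fun d e => decide (d ≤ 2 ∧ e ≤ 1)) (by intro d e; rw [Bool.eq_iff_iff]; simp only [Bool.and_eq_true, decide_eq_true_eq]; omega),
    cnt_congr (k + 2) (p := fun d e => decide (1 ≤ 1 ∧ e + 2 ≤ 2) && decide (d ≤ 1))
    (q := fun d e => decide (d ≤ 1 ∧ e ≤ 0)) (by intro d e; rw [Bool.eq_iff_iff]; simp only [Bool.and_eq_true, decide_eq_true_eq]; omega),
    cnt_false (k + 1) (by simp), cnt_false (k + 1) (by simp)]
  ring

lemma sU0_rec (k : ℕ) : sU0 (k + 4) = sV (k + 3) := by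
  simp only [sU0, sV]
  rw [cnt_rec]
  rw [cnt_false (k + 3) (p := fun d e => decide (d + 1 ≤ 0 ∧ 0 ≤ 2) && decide (e ≤ 2)) (by simp),
    cnt_congr (k + 3) (p := fun d e => decide (0 ≤ 0 ∧ e + 1 ≤ 2) && decide (d ≤ 2))
    (q := fun d e => decide (d ≤ 2 ∧ e ≤ 1)) (by intro d e; rw [Bool.eq_iff_iff]; simp only [Bool.and_eq_true, decide_eq_true_eq]; omega),
    cnt_false (k + 2) (by simp),
    cnt_false (k + 1) (by simp), cnt_false (k + 1) (by simp)]
  ring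

lemma sV_rec (k : ℕ) : sV (k + 4) = sU1 (k + 3) + sW2 (k + 3) := by
  simp only [sV, sU1, sW2]
  rw [cnt_rec]
  rw [cnt_congr (k + 3) (p := fun d e => decide (d + 1 ≤ 2 ∧ 0 ≤ 1) && decide (e ≤ 2))
    (q := fun d e => decide (d ≤ 1 ∧ e ≤ 2)) (by intro d e; rw [Bool.eq_iff_iff]; simp only [Bool.and_eq_true, decide_eq_true_eq]; omega),
    cnt_congr (k + 3) (p := fun d e => decide (0 ≤ 2 ∧ e + 1 ≤ 1) && decide (d ≤ 2))
    (q := fun d e => decide (d ≤ 2 ∧ e ≤ 0)) (by intro d e; rw [Bool.eq_iff_iff]; simp only [Bool.and_eq_true, decide_eq_true_eq]; omega),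
    cnt_false (k + 2) (by simp),
    cnt_false (k + 1) (by simp), cnt_false (k + 1) (by simp)]
  ring

lemma sW1_rec (k : ℕ) : sW1 (k + 4) = sU0 (k + 3) := by
  simp only [sW1, sU0]
  rw [cnt_rec]
  rw [cnt_congr (k + 3) (p := fun d e => decide (d + 1 ≤ 1 ∧ 0 ≤ 0) && decide (e ≤ 2))
    (q := fun d e => decide (d ≤ 0 ∧ e ≤ 2)) (by intro d e; rw [Bool.eq_iff_iff]; simp only [Bool.and_eq_true, decide_eq_true_eq]; omega),
    cnt_false (k + 3) (p := fun d e => decide (0 ≤ 1 ∧ e + 1 ≤ 0) && decide (d ≤ 2)) (by simp),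
    cnt_false (k + 2) (by simp),
    cnt_false (k + 1) (by simp), cnt_false (k + 1) (by simp)]
  ring

lemma sW2_rec (k : ℕ) : sW2 (k + 4) = sU1 (k + 3) := by
  simp only [sW2, sU1]
  rw [cnt_rec]
  rw [cnt_congr (k + 3) (p := fun d e => decide (d + 1 ≤ 2 ∧ 0 ≤ 0) && decide (e ≤ 2))
    (q := fun d e => decide (d ≤ 1 ∧ e ≤ 2)) (by intro d e; rw [Bool.eq_iff_iff]; simp only [Bool.and_eq_true, decide_eq_true_eq]; omega),
    cnt_false (k + 3) (p := fun d e => decide (0 ≤ 2 ∧ e + 1 ≤ 0) && decide (d ≤ 2)) (by simp),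
    cnt_false (k + 2) (by simp),
    cnt_false (k + 1) (by simp), cnt_false (k + 1) (by simp)]
  ring

/-- Fast evaluation state. -/
structure St where
  A : ℕ
  T0 : ℕ
  T1 : ℕ
  T2 : ℕ
  Ui : ℕ
  U0 : ℕ
  U1 : ℕ
  V : ℕ
  W1 : ℕ
  W2 : ℕ
  T1b : ℕ
  W1b : ℕ
  T0b : ℕ
  T0c : ℕ

def st : ℕ → St
  | 0 => ⟨1, 1, 1, 1, 1, 1, 1, 1, 1, 1, 0, 0, 0, 0⟩
  | k + 1 =>
    let s := st k
    ⟨s.Ui + s.T2 + s.T1b + 2 * s.T0c, s.T2, s.U0 + s.T2 + s.T1b + s.T0c,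
      s.U1 + s.T2 + s.T1b + 2 * s.T0c, s.Ui + s.V + s.W1b, s.V, s.U0 + s.V + s.W1b,
      s.U1 + s.W2, s.U0, s.U1, s.T1, s.W1, s.T0, s.T0b⟩

lemma st_eq (k : ℕ) : st k = ⟨sA (k + 3), sT0 (k + 3), sT1 (k + 3), sT2 (k + 3), sUi (k + 3),
    sU0 (k + 3), sU1 (k + 3), sV (k + 3), sW1 (k + 3), sW2 (k + 3), sT1 (k + 2), sW1 (k + 2),
    sT0 (k + 2), sT0 (k + 1)⟩ := by
  induction k with
  | zero => rfl
  | succ k ih =>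
    rw [st, ih]
    simp only [show k + 1 + 3 = k + 4 from rfl, show k + 1 + 2 = k + 3 from rfl,
      show k + 1 + 1 = k + 2 from rfl,
      sA_rec, sT0_rec, sT1_rec, sT2_rec, sUi_rec, sU0_rec, sU1_rec, sV_rec, sW1_rec, sW2_rec]

lemma sA_st (k : ℕ) : sA (k + 3) = (st k).A := by rw [st_eq]

lemma sA_fast (m : ℕ) (hm : m < 12) :
    (sA (m + 16) : ℤ) = 2 * sA (m + 15) + sA (m + 14) - sA (m + 13) - sA (m + 12) - 2 * sA (m + 11)
      - 2 * sA (m + 10) - 2 * sA (m + 9) + 4 * sA (m + 8) + 2 * sA (m + 7) - sA (m + 6)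
      + 2 * sA (m + 5) - sA (m + 3) := by
  have h := fun j => sA_st (m + j)
  rw [h 13, h 12, h 11, h 10, h 9, h 8, h 7, h 6, h 5, h 4, h 3, h 2, sA_st m]
  interval_cases m <;> decide

lemma big_rec {V U1 Ui T1 T2 A : ℕ → ℤ}
    (hU1 : ∀ m, U1 (m + 7) = V (m + 6) + V (m + 5) + V (m + 3))
    (hV : ∀ m, V (m + 7) = U1 (m + 6) + U1 (m + 5))
    (hUi : ∀ m, Ui (m + 7) = Ui (m + 6) + V (m + 6) + V (m + 3))
    (hT1 : ∀ m, T1 (m + 7) = V (m + 5) + T2 (m + 6) + T1 (m + 5) + T2 (m + 3))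
    (hT2 : ∀ m, T2 (m + 7) = U1 (m + 6) + T2 (m + 6) + T1 (m + 5) + 2 * T2 (m + 3))
    (hA : ∀ m, A (m + 7) = Ui (m + 6) + T2 (m + 6) + T1 (m + 5) + 2 * T2 (m + 3)) (m : ℕ) :
    A (m + 27) = 2 * A (m + 26) + A (m + 25) - A (m + 24) - A (m + 23) - 2 * A (m + 22)
      - 2 * A (m + 21) - 2 * A (m + 20) + 4 * A (m + 19) + 2 * A (m + 18) - A (m + 17)
      + 2 * A (m + 16) - A (m + 14) := by
  -- recurrence for V
  have P6 : ∀ m, V (m + 13) = V (m + 11) + 2 * V (m + 10) + V (m + 9) + V (m + 8) + V (m + 7) := by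
    intro m
    linear_combination hV (m + 6) + hU1 (m + 5) + hU1 (m + 4)
  have HT : ∀ m, T2 (m + 14) = T2 (m + 13) + T2 (m + 12) + 2 * T2 (m + 10) - T2 (m + 8)
      + V (m + 12) + V (m + 11) - V (m + 7) := by
    intro m
    linear_combination hT2 (m + 7) - hT2 (m + 5) + hU1 (m + 6) - hU1 (m + 4) + hT1 (m + 5)
  have HA : ∀ m, A (m + 8) = T2 (m + 8) + Ui (m + 7) - U1 (m + 7) := by
    intro m
    linear_combination hA (m + 1) - hT2 (m + 1)
  have HA2 : ∀ m, A (m + 15) - A (m + 14) = T2 (m + 15) - T2 (m + 14) + V (m + 11) + V (m + 9) := by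
    intro m
    linear_combination HA (m + 7) - HA (m + 6) + hUi (m + 7) - hU1 (m + 7) + hU1 (m + 6)
  have HY : ∀ m, A (m + 21) - 2 * A (m + 20) + A (m + 18) - 2 * A (m + 17) + 2 * A (m + 16)
      + A (m + 15) - A (m + 14) = V (m + 19) - V (m + 16) - 2 * V (m + 14) - 2 * V (m + 13)
      - V (m + 11) + V (m + 9) := by
    intro m
    linear_combination HA2 (m + 6) - HA2 (m + 5) - HA2 (m + 4) - 2 * HA2 (m + 2) + HA2 m
      + HT (m + 7) - HT (m + 6)
  linear_combination HY (m + 6) - HY (m + 4) - 2 * HY (m + 3) - HY (m + 2) - HY (m + 1) - HY m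
    + P6 (m + 12) - P6 (m + 9) - 2 * P6 (m + 7) - 2 * P6 (m + 6) - P6 (m + 4) + P6 (m + 2)

lemma sA_rec13 (m : ℕ) :
    (sA (m + 16) : ℤ) = 2 * sA (m + 15) + sA (m + 14) - sA (m + 13) - sA (m + 12) - 2 * sA (m + 11)
      - 2 * sA (m + 10) - 2 * sA (m + 9) + 4 * sA (m + 8) + 2 * sA (m + 7) - sA (m + 6)
      + 2 * sA (m + 5) - sA (m + 3) := by
  rcases lt_or_ge m 12 with h | h
  · exact sA_fast m h
  · obtain ⟨j, rfl⟩ : ∃ j, m = j + 11 := ⟨m - 11, by omega⟩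
    have := big_rec (V := fun k => (sV k : ℤ)) (U1 := fun k => (sU1 k : ℤ))
      (Ui := fun k => (sUi k : ℤ)) (T1 := fun k => (sT1 k : ℤ)) (T2 := fun k => (sT2 k : ℤ))
      (A := fun k => (sA k : ℤ)) ?_ ?_ ?_ ?_ ?_ ?_ j
    · exact this
    · intro m
      rw [sU1_rec (m + 3), sU0_rec (m + 2), sW1_rec (m + 1), sU0_rec m]
      push_cast
      ring
    · intro m
      rw [sV_rec (m + 3), sW2_rec (m + 2)]
      push_cast
      ring
    · intro m
      rw [sUi_rec (m + 3), sW1_rec (m + 1), sU0_rec m]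
      push_cast
      ring
    · intro m
      rw [sT1_rec (m + 3), sU0_rec (m + 2), sT0_rec m]
      push_cast
      ring
    · intro m
      rw [sT2_rec (m + 3), sT0_rec m]
      push_cast
      ring
    · intro m
      rw [sA_rec (m + 3), sT0_rec m]
      push_cast
      ring

lemma aCount_sA (n : ℕ) : aCount 3 (n + 1) = sA (n + 3) := by
  rw [aCount_eq _ (by omega)]
  simp [sA, cnt]

lemma aCount_small : aCount 3 0 = 1 ∧ aCount 3 1 = 1 ∧ aCount 3 2 = 2 ∧ aCount 3 3 = 5 ∧
    aCount 3 4 = 14 ∧ aCount 3 5 = 28 ∧ aCount 3 6 = 55 ∧ aCount 3 7 = 108 ∧ aCount 3 8 = 214 ∧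
    aCount 3 9 = 412 ∧ aCount 3 10 = 787 ∧ aCount 3 11 = 1497 ∧ aCount 3 12 = 2841 ∧
    aCount 3 13 = 5364 := by
  have h : ∀ n, aCount 3 (n + 1) = (st n).A := fun n => by rw [aCount_sA, sA_st]
  refine ⟨aCount_zero, ?_, ?_, ?_, ?_, ?_, ?_, ?_, ?_, ?_, ?_, ?_, ?_, ?_⟩ <;> rw [h] <;> rfl

lemma aCount_rec (n : ℕ) : (aCount 3 (n + 13) : ℝ) = 2 * aCount 3 (n + 12) + aCount 3 (n + 11)
      - aCount 3 (n + 10) - aCount 3 (n + 9) - 2 * aCount 3 (n + 8)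
      - 2 * aCount 3 (n + 7) - 2 * aCount 3 (n + 6) + 4 * aCount 3 (n + 5) + 2 * aCount 3 (n + 4)
      - aCount 3 (n + 3) + 2 * aCount 3 (n + 2) - aCount 3 n := by
  cases n with
  | zero =>
    obtain ⟨h0, h1, h2, h3, h4, h5, h6, h7, h8, h9, h10, h11, h12, h13⟩ := aCount_small
    simp only [Nat.zero_add, h0, h2, h3, h4, h5, h6, h7, h8, h9, h10, h11, h12, h13]
    norm_num
  | succ m =>
    have h := sA_rec13 m
    have e := fun j => aCount_sA (m + j)
    rw [show m + 1 + 13 = m + 13 + 1 by ring, show m + 1 + 12 = m + 12 + 1 by ring,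
      show m + 1 + 11 = m + 11 + 1 by ring, show m + 1 + 10 = m + 10 + 1 by ring,
      show m + 1 + 9 = m + 9 + 1 by ring, show m + 1 + 8 = m + 8 + 1 by ring,
      show m + 1 + 7 = m + 7 + 1 by ring, show m + 1 + 6 = m + 6 + 1 by ring,
      show m + 1 + 5 = m + 5 + 1 by ring, show m + 1 + 4 = m + 4 + 1 by ring,
      show m + 1 + 3 = m + 3 + 1 by ring, show m + 1 + 2 = m + 2 + 1 by ring]
    rw [e 13, e 12, e 11, e 10, e 9, e 8, e 7, e 6, e 5, e 4, e 3, e 2, aCount_sA m]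
    exact_mod_cast h

end Bdd

namespace Bdd

lemma H_anti : StrictAntiOn (fun x : ℝ => x ^ 5 - x ^ 4 - x ^ 3 + x ^ 2 - 2 * x + 1)
      (Set.Icc (0 : ℝ) 1) := by
  apply strictAntiOn_of_deriv_neg (convex_Icc 0 1) (by fun_prop)
  intro x hx
  rw [interior_Icc] at hx
  obtain ⟨h0, h1⟩ := hx
  have hd : HasDerivAt (fun x : ℝ => x ^ 5 - x ^ 4 - x ^ 3 + x ^ 2 - 2 * x + 1)
      (5 * x ^ 4 - 4 * x ^ 3 - 3 * x ^ 2 + 2 * x - 2) x := by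
    have := (((((hasDerivAt_pow 5 x).sub (hasDerivAt_pow 4 x)).sub (hasDerivAt_pow 3 x)).add
      (hasDerivAt_pow 2 x)).sub ((hasDerivAt_id x).const_mul 2)).add_const 1
    exact HasDerivAt.congr_deriv this (by norm_num)
  rw [hd.deriv]
  have h2 : x ^ 4 ≤ x ^ 3 := pow_le_pow_of_le_one h0.le h1.le (by norm_num)
  have h3 : x ^ 3 ≤ x ^ 2 := pow_le_pow_of_le_one h0.le h1.le (by norm_num)
  nlinarith [sq_nonneg x, sq_nonneg (x - 1)]

lemma exists_rho : ∃ ρ : ℝ, (54749 / 100000 : ℝ) ≤ ρ ∧ ρ ≤ 54750 / 100000 ∧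
    ρ ^ 5 - ρ ^ 4 - ρ ^ 3 + ρ ^ 2 - 2 * ρ + 1 = 0 := by
  have hc : ContinuousOn (fun x : ℝ => x ^ 5 - x ^ 4 - x ^ 3 + x ^ 2 - 2 * x + 1)
      (Set.Icc (54749 / 100000) (54750 / 100000)) := by fun_prop
  have := intermediate_value_Icc' (by norm_num) hc
  obtain ⟨ρ, h1, h2⟩ := this (show (0 : ℝ) ∈ _ by constructor <;> norm_num)
  exact ⟨ρ, h1.1, h1.2, h2⟩

/-- A linear contraction forces summability. -/
lemma summable_of_contr {w : ℕ → ℝ} {t : ℕ → ℝ} (ht : ∀ k, 0 ≤ t k)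
    (hs : ∑ k ∈ Finset.range 12, t k < 1)
    (hw : ∀ n, |w (n + 12)| ≤ ∑ k ∈ Finset.range 12, t k * |w (n + (11 - k))|) :
    Summable w := by
  have hnn : ∀ i, 0 ≤ |w i| := fun i => abs_nonneg _
  set S : ℕ → ℝ := fun N => ∑ i ∈ Finset.range N, |w i| with hS
  have hmono : Monotone S := fun a b hab =>
    Finset.sum_le_sum_of_subset_of_nonneg (Finset.range_mono hab) (fun i _ _ => hnn i)
  have hshift : ∀ N j, j ≤ 12 → ∑ n ∈ Finset.range N, |w (n + j)| ≤ S (N + 12) := by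
    intro N j hj
    have h1 : S (j + N) = S j + ∑ n ∈ Finset.range N, |w (j + n)| := Finset.sum_range_add _ _ _
    have h2 : 0 ≤ S j := Finset.sum_nonneg (fun i _ => hnn i)
    have h3 : S (j + N) ≤ S (N + 12) := hmono (by omega)
    have h4 : ∑ n ∈ Finset.range N, |w (n + j)| = ∑ n ∈ Finset.range N, |w (j + n)| :=
      Finset.sum_congr rfl (fun i _ => by rw [add_comm])
    linarith
  have hmain : ∀ N, S (N + 12) ≤ S 12 + (∑ k ∈ Finset.range 12, t k) * S (N + 12) := by
    intro N
    have h1 : S (12 + N) = S 12 + ∑ n ∈ Finset.range N, |w (12 + n)| := Finset.sum_range_add _ _ _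
    rw [add_comm 12 N] at h1
    have h2 : ∑ n ∈ Finset.range N, |w (12 + n)| ≤
        ∑ n ∈ Finset.range N, ∑ k ∈ Finset.range 12, t k * |w (n + (11 - k))| :=
      Finset.sum_le_sum (fun n _ => by rw [add_comm]; exact hw n)
    rw [Finset.sum_comm] at h2
    have h3 : ∑ k ∈ Finset.range 12, ∑ n ∈ Finset.range N, t k * |w (n + (11 - k))| ≤
        ∑ k ∈ Finset.range 12, t k * S (N + 12) := by
      refine Finset.sum_le_sum (fun k _ => ?_)
      rw [← Finset.mul_sum]
      exact mul_le_mul_of_nonneg_left (hshift N _ (by omega)) (ht k)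
    rw [← Finset.sum_mul] at h3
    linarith
  have hb : ∀ N, S N ≤ S 12 / (1 - ∑ k ∈ Finset.range 12, t k) := by
    intro N
    rw [le_div_iff₀ (by linarith)]
    have h1 := hmain N
    have h2 : S N ≤ S (N + 12) := hmono (by omega)
    have h3 : S N * (1 - ∑ k ∈ Finset.range 12, t k) ≤
      S (N + 12) * (1 - ∑ k ∈ Finset.range 12, t k) :=
      mul_le_mul_of_nonneg_right h2 (by linarith)
    linarith
  exact (summable_of_sum_range_le hnn hb).of_abs

def s1 (ρ : ℝ) : ℝ := 1 - 2 * ρ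
def s2 (ρ : ℝ) : ℝ := 1 - 2 * ρ - ρ ^ 2
def s3 (ρ : ℝ) : ℝ := 1 - 2 * ρ - ρ ^ 2 + ρ ^ 3
def s4 (ρ : ℝ) : ℝ := 1 - 2 * ρ - ρ ^ 2 + ρ ^ 3 + ρ ^ 4
def s5 (ρ : ℝ) : ℝ := 1 - 2 * ρ - ρ ^ 2 + ρ ^ 3 + ρ ^ 4 + 2 * ρ ^ 5
def s6 (ρ : ℝ) : ℝ := 1 - 2 * ρ - ρ ^ 2 + ρ ^ 3 + ρ ^ 4 + 2 * ρ ^ 5 + 2 * ρ ^ 6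
def s7 (ρ : ℝ) : ℝ := 1 - 2 * ρ - ρ ^ 2 + ρ ^ 3 + ρ ^ 4 + 2 * ρ ^ 5 + 2 * ρ ^ 6 + 2 * ρ ^ 7
def s8 (ρ : ℝ) : ℝ := 1 - 2 * ρ - ρ ^ 2 + ρ ^ 3 + ρ ^ 4 + 2 * ρ ^ 5 + 2 * ρ ^ 6 + 2 * ρ ^ 7 - 4 * ρ ^ 8
def s9 (ρ : ℝ) : ℝ := 1 - 2 * ρ - ρ ^ 2 + ρ ^ 3 + ρ ^ 4 + 2 * ρ ^ 5 + 2 * ρ ^ 6 + 2 * ρ ^ 7 - 4 * ρ ^ 8 - 2 * ρ ^ 9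
def s10 (ρ : ℝ) : ℝ := 1 - 2 * ρ - ρ ^ 2 + ρ ^ 3 + ρ ^ 4 + 2 * ρ ^ 5 + 2 * ρ ^ 6 + 2 * ρ ^ 7 - 4 * ρ ^ 8 - 2 * ρ ^ 9 + ρ ^ 10
def s11 (ρ : ℝ) : ℝ := 1 - 2 * ρ - ρ ^ 2 + ρ ^ 3 + ρ ^ 4 + 2 * ρ ^ 5 + 2 * ρ ^ 6 + 2 * ρ ^ 7 - 4 * ρ ^ 8 - 2 * ρ ^ 9 + ρ ^ 10 - 2 * ρ ^ 11
def s12 (ρ : ℝ) : ℝ := 1 - 2 * ρ - ρ ^ 2 + ρ ^ 3 + ρ ^ 4 + 2 * ρ ^ 5 + 2 * ρ ^ 6 + 2 * ρ ^ 7 - 4 * ρ ^ 8 - 2 * ρ ^ 9 + ρ ^ 10 - 2 * ρ ^ 11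

lemma s_bounds {ρ : ℝ} (h1 : (54749 / 100000 : ℝ) ≤ ρ) (h2 : ρ ≤ 54750 / 100000) :
    |s1 ρ| ≤ 960 / 10000 ∧
    |s2 ρ| ≤ 3958 / 10000 ∧
    |s3 ρ| ≤ 2317 / 10000 ∧
    |s4 ρ| ≤ 1418 / 10000 ∧
    |s5 ρ| ≤ 434 / 10000 ∧
    |s6 ρ| ≤ 125 / 10000 ∧
    |s7 ρ| ≤ 420 / 10000 ∧
    |s8 ρ| ≤ 97 / 10000 ∧
    |s9 ρ| ≤ 12 / 10000 ∧
    |s10 ρ| ≤ 33 / 10000 ∧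
    |s11 ρ| ≤ 14 / 10000 ∧
    |s12 ρ| ≤ 14 / 10000 := by
  have lo : ∀ i, (54749 / 100000 : ℝ) ^ i ≤ ρ ^ i := fun i => pow_le_pow_left₀ (by norm_num) h1 i
  have hi : ∀ i, ρ ^ i ≤ (54750 / 100000 : ℝ) ^ i := fun i => pow_le_pow_left₀ (by linarith) h2 i
  have l2 := lo 2
  have u2 := hi 2
  have l3 := lo 3
  have u3 := hi 3
  have l4 := lo 4
  have u4 := hi 4
  have l5 := lo 5
  have u5 := hi 5
  have l6 := lo 6
  have u6 := hi 6
  have l7 := lo 7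
  have u7 := hi 7
  have l8 := lo 8
  have u8 := hi 8
  have l9 := lo 9
  have u9 := hi 9
  have l10 := lo 10
  have u10 := hi 10
  have l11 := lo 11
  have u11 := hi 11
  have l12 := lo 12
  have u12 := hi 12
  have l13 := lo 13
  have u13 := hi 13
  norm_num at l2 u2 l3 u3 l4 u4 l5 u5 l6 u6 l7 u7 l8 u8 l9 u9 l10 u10 l11 u11 l12 u12 l13 u13
  refine ⟨?_, ?_, ?_, ?_, ?_, ?_, ?_, ?_, ?_, ?_, ?_, ?_⟩ <;> rw [abs_le] <;>
    simp only [s1, s2, s3, s4, s5, s6, s7, s8, s9, s10, s11, s12] <;> constructor <;> linarith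

lemma D_zero {ρ : ℝ} (h : ρ ^ 5 - ρ ^ 4 - ρ ^ 3 + ρ ^ 2 - 2 * ρ + 1 = 0) :
    1 - 2 * ρ - ρ ^ 2 + ρ ^ 3 + ρ ^ 4 + 2 * ρ ^ 5 + 2 * ρ ^ 6 + 2 * ρ ^ 7 - 4 * ρ ^ 8 - 2 * ρ ^ 9 + ρ ^ 10 - 2 * ρ ^ 11 + ρ ^ 13 = 0 := by
  linear_combination (1 - 2 * ρ ^ 2 - 2 * ρ ^ 3 + ρ ^ 5 + ρ ^ 7 + ρ ^ 8) * h

lemma limit_aux {ρ : ℝ} (h1 : (54749 / 100000 : ℝ) ≤ ρ) (h2 : ρ ≤ 54750 / 100000)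
    (h : ρ ^ 5 - ρ ^ 4 - ρ ^ 3 + ρ ^ 2 - 2 * ρ + 1 = 0) :
    Filter.Tendsto (fun n : ℕ => (aCount 3 n : ℝ) * ρ ^ n) Filter.atTop
        (nhds (-(N3poly.eval ρ) / (ρ * (Polynomial.derivative D3poly).eval ρ))) := by
  have hD := D_zero h
  set b : ℕ → ℝ := fun n => (aCount 3 n : ℝ) * ρ ^ n with hb
  set w : ℕ → ℝ := fun n => b (n + 1) - b n with hw
  have hbrec : ∀ n, b (n + 13) + (s1 ρ - 1) * b (n + 12)
      + (s2 ρ - s1 ρ) * b (n + 11)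
      + (s3 ρ - s2 ρ) * b (n + 10)
      + (s4 ρ - s3 ρ) * b (n + 9)
      + (s5 ρ - s4 ρ) * b (n + 8)
      + (s6 ρ - s5 ρ) * b (n + 7)
      + (s7 ρ - s6 ρ) * b (n + 6)
      + (s8 ρ - s7 ρ) * b (n + 5)
      + (s9 ρ - s8 ρ) * b (n + 4)
      + (s10 ρ - s9 ρ) * b (n + 3)
      + (s11 ρ - s10 ρ) * b (n + 2)
      + (s12 ρ - s11 ρ) * b (n + 1) + ρ ^ 13 * b n = 0 := by
    intro n
    have hr := aCount_rec n
    simp only [hb, s1, s2, s3, s4, s5, s6, s7, s8, s9, s10, s11, s12]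
    rw [hr]
    ring
  have hwrec : ∀ n, w (n + 12) + s1 ρ * w (n + 11) + s2 ρ * w (n + 10) + s3 ρ * w (n + 9) + s4 ρ * w (n + 8) + s5 ρ * w (n + 7) + s6 ρ * w (n + 6) + s7 ρ * w (n + 5) + s8 ρ * w (n + 4) + s9 ρ * w (n + 3) + s10 ρ * w (n + 2) + s11 ρ * w (n + 1) + s12 ρ * w n = 0 := by
    intro n
    have e : s12 ρ = - ρ ^ 13 := by
      simp only [s12]
      linarith
    have := hbrec n
    simp only [hw]
    simp only [add_assoc, Nat.reduceAdd] at this ⊢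
    rw [e] at this ⊢
    linear_combination this
  obtain ⟨q1, q2, q3, q4, q5, q6, q7, q8, q9, q10, q11, q12⟩ := s_bounds h1 h2
  have hsum : Summable w := by
    refine summable_of_contr (t := fun k => match k with
      | 0 => 960 / 10000
      | 1 => 3958 / 10000
      | 2 => 2317 / 10000
      | 3 => 1418 / 10000
      | 4 => 434 / 10000
      | 5 => 125 / 10000
      | 6 => 420 / 10000
      | 7 => 97 / 10000
      | 8 => 12 / 10000
      | 9 => 33 / 10000
      | 10 => 14 / 10000
      | 11 => 14 / 10000
      | _ => 0) ?_ ?_ ?_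
    · intro k
      split <;> norm_num
    · simp only [Finset.sum_range_succ, Finset.sum_range_zero]
      norm_num
    · intro n
      simp only [Finset.sum_range_succ, Finset.sum_range_zero, Nat.reduceSub, Nat.sub_zero, Nat.sub_self, add_zero, zero_add]
      have e : w (n + 12) = -(s1 ρ * w (n + 11) + s2 ρ * w (n + 10) + s3 ρ * w (n + 9) + s4 ρ * w (n + 8) + s5 ρ * w (n + 7) + s6 ρ * w (n + 6) + s7 ρ * w (n + 5) + s8 ρ * w (n + 4) + s9 ρ * w (n + 3) + s10 ρ * w (n + 2) + s11 ρ * w (n + 1) + s12 ρ * w n) := by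
        linarith [hwrec n]
      rw [e, abs_neg]
      have m : ∀ {x y c : ℝ}, |x| ≤ c → |x * y| ≤ c * |y| := by
        intro x y c hx
        rw [abs_mul]
        exact mul_le_mul_of_nonneg_right hx (abs_nonneg _)
      refine (abs_add_le _ _).trans (add_le_add ((abs_add_le _ _).trans (add_le_add ((abs_add_le _ _).trans (add_le_add ((abs_add_le _ _).trans (add_le_add ((abs_add_le _ _).trans (add_le_add ((abs_add_le _ _).trans (add_le_add ((abs_add_le _ _).trans (add_le_add ((abs_add_le _ _).trans (add_le_add ((abs_add_le _ _).trans (add_le_add ((abs_add_le _ _).trans (add_le_add ((abs_add_le _ _).trans (add_le_add (m q1) (m q2))) (m q3))) (m q4))) (m q5))) (m q6))) (m q7))) (m q8))) (m q9))) (m q10))) (m q11))) (m q12))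
  obtain ⟨β, hβ⟩ : ∃ β, Filter.Tendsto b Filter.atTop (nhds β) := by
    refine ⟨b 0 + ∑' n, w n, ?_⟩
    have h3 := (hsum.hasSum.tendsto_sum_nat).const_add (b 0)
    refine h3.congr (fun n => ?_)
    simp only [hw]
    rw [Finset.sum_range_sub]
    ring
  have hinv : ∀ n, b (n + 12) + s1 ρ * b (n + 11) + s2 ρ * b (n + 10) + s3 ρ * b (n + 9) + s4 ρ * b (n + 8) + s5 ρ * b (n + 7) + s6 ρ * b (n + 6) + s7 ρ * b (n + 5) + s8 ρ * b (n + 4) + s9 ρ * b (n + 3) + s10 ρ * b (n + 2) + s11 ρ * b (n + 1) + s12 ρ * b n = N3poly.eval ρ := by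
    intro n
    induction n with
    | zero =>
      obtain ⟨a0, a1, a2, a3, a4, a5, a6, a7, a8, a9, a10, a11, a12, a13⟩ := aCount_small
      simp only [hb, Nat.zero_add, a0, a1, a2, a3, a4, a5, a6, a7, a8, a9, a10, a11, a12, s1, s2, s3, s4, s5, s6, s7, s8, s9, s10, s11, s12, N3poly]
      simp
      ring
    | succ n ih =>
      have := hwrec n
      simp only [hw] at this
      simp only [add_assoc, Nat.reduceAdd, add_comm 1] at this ih ⊢
      linarith
  have hlim : (1 + s1 ρ + s2 ρ + s3 ρ + s4 ρ + s5 ρ + s6 ρ + s7 ρ + s8 ρ + s9 ρ + s10 ρ + s11 ρ + s12 ρ) * β = N3poly.eval ρ := by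
    have hsh : ∀ j, Filter.Tendsto (fun n => b (n + j)) Filter.atTop (nhds β) := fun j =>
      (Filter.tendsto_add_atTop_iff_nat j).2 hβ
    have hL := ((((((((((((hsh 12).add ((hsh 11).const_mul (s1 ρ))).add ((hsh 10).const_mul (s2 ρ))).add ((hsh 9).const_mul (s3 ρ))).add ((hsh 8).const_mul (s4 ρ))).add ((hsh 7).const_mul (s5 ρ))).add ((hsh 6).const_mul (s6 ρ))).add ((hsh 5).const_mul (s7 ρ))).add ((hsh 4).const_mul (s8 ρ))).add ((hsh 3).const_mul (s9 ρ))).add ((hsh 2).const_mul (s10 ρ))).add ((hsh 1).const_mul (s11 ρ))).add ((hsh 0).const_mul (s12 ρ))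
    have hc := hL.congr hinv
    have := tendsto_nhds_unique hc tendsto_const_nhds
    linarith
  have hpos : 0 < 1 + s1 ρ + s2 ρ + s3 ρ + s4 ρ + s5 ρ + s6 ρ + s7 ρ + s8 ρ + s9 ρ + s10 ρ + s11 ρ + s12 ρ := by
    simp only [abs_le] at q1 q2 q3 q4 q5 q6 q7 q8 q9 q10 q11 q12
    linarith
  have hder : 1 + s1 ρ + s2 ρ + s3 ρ + s4 ρ + s5 ρ + s6 ρ + s7 ρ + s8 ρ + s9 ρ + s10 ρ + s11 ρ + s12 ρ = -(ρ * (Polynomial.derivative D3poly).eval ρ) := by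
    simp only [D3poly, s1, s2, s3, s4, s5, s6, s7, s8, s9, s10, s11, s12]
    simp
    linear_combination 13 * hD
  rw [hder] at hlim hpos
  have : β = -(N3poly.eval ρ) / (ρ * (Polynomial.derivative D3poly).eval ρ) := by
    rw [eq_div_iff (by linarith)]
    linarith
  rw [← this]
  exact hβ

end Bdd

theorem asymptotics_m_eq_three :
    StrictAntiOn (fun x : ℝ => x ^ 5 - x ^ 4 - x ^ 3 + x ^ 2 - 2 * x + 1)
      (Set.Icc (0 : ℝ) 1) ∧
    ∃ ρ : ℝ, ρ ∈ Set.Ioo (0 : ℝ) 1 ∧ ρ ^ 5 - ρ ^ 4 - ρ ^ 3 + ρ ^ 2 - 2 * ρ + 1 = 0 ∧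
      (∀ t : ℝ, t ∈ Set.Ioo (0 : ℝ) 1 → t ^ 5 - t ^ 4 - t ^ 3 + t ^ 2 - 2 * t + 1 = 0 → t = ρ) ∧
      Filter.Tendsto (fun n : ℕ => (aCount 3 n : ℝ) * ρ ^ n) Filter.atTop
        (nhds (-(N3poly.eval ρ) / (ρ * (Polynomial.derivative D3poly).eval ρ))) := by
  refine ⟨Bdd.H_anti, ?_⟩
  obtain ⟨ρ, h1, h2, h3⟩ := Bdd.exists_rho
  refine ⟨ρ, ⟨by linarith, by linarith⟩, h3, ?_, Bdd.limit_aux h1 h2 h3⟩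
  intro t ht h4
  refine Bdd.H_anti.injOn ⟨ht.1.le, ht.2.le⟩ ⟨by linarith, by linarith⟩ ?_
  rw [h4, h3]
end
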